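/- arXiv:2410.06132 — 2 statements merged into one kernel-verified Lean document; each statement's English description precedes it below -/
import Mathlib

section
/- There exist absolute constants C and C' such that the following holds. Let G be a bipartite graph with parts X₁ and X₂, each of size N, which is (ε, δ)-super-regular, and suppose N is sufficiently large in terms of ε and δ. Then for any d̄ with 0 < d̄ ≤ δ − Cε such that d̄N² is an integer, G contains a spanning subgraph whose density is exactly d̄ and which is ε'-super-regular, where ε' = C'ε^{1/2}. -/
open Finset
open scoped Classical

/-- The density of the pair of vertex sets `(A, B)` in the graph `G`. -/
noncomputable def edgeDensityR {V : Type} (G : SimpleGraph V) (A B : Finset V) : ℝ :=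
  (∑ a ∈ A, ((B.filter fun b => G.Adj a b).card : ℝ)) / ((A.card : ℝ) * (B.card : ℝ))

/-- The pair `(A, B)` is `ε`-regular in `G`. -/
noncomputable def IsRegularPair {V : Type} (G : SimpleGraph V) (A B : Finset V) (ε : ℝ) : Prop :=
  ∀ X ⊆ A, ∀ Y ⊆ B, ε * A.card ≤ X.card → ε * B.card ≤ Y.card →
    |edgeDensityR G X Y - edgeDensityR G A B| ≤ ε

/-- The pair `(A, B)` is `(ε, δ)`-super-regular in `G`. -/
noncomputable def IsSuperRegularPair {V : Type} (G : SimpleGraph V) (A B : Finset V)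
    (ε δ : ℝ) (N : ℕ) : Prop :=
  IsRegularPair G A B ε ∧ A.card = N ∧ B.card = N ∧
    (∀ v ∈ A, δ * N ≤ ((B.filter fun b => G.Adj v b).card : ℝ)) ∧
    (∀ v ∈ B, δ * N ≤ ((A.filter fun a => G.Adj v a).card : ℝ))

/-- The pair `(A, B)` is `ε`-super-regular in `G`: it is `ε`-regular,
`|A| = |B| = N`, and every vertex on one side has between `(d - ε)N` and
`(d + ε)N` neighbours on the other side, where `d` is the density of the pair. -/
noncomputable def IsEpsSuperRegularPair {V : Type} (G : SimpleGraph V) (A B : Finset V)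
    (ε : ℝ) (N : ℕ) : Prop :=
  IsRegularPair G A B ε ∧ A.card = N ∧ B.card = N ∧
    (∀ v ∈ A, (edgeDensityR G A B - ε) * N ≤ ((B.filter fun b => G.Adj v b).card : ℝ) ∧
      ((B.filter fun b => G.Adj v b).card : ℝ) ≤ (edgeDensityR G A B + ε) * N) ∧
    (∀ v ∈ B, (edgeDensityR G A B - ε) * N ≤ ((A.filter fun a => G.Adj v a).card : ℝ) ∧
      ((A.filter fun a => G.Adj v a).card : ℝ) ≤ (edgeDensityR G A B + ε) * N)

/-!
Weight the edge `(u, v)` of `G` by `δ d |X₁| |X₂| / (deg u · deg v)`, truncated at `1`, where the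
degrees that are already close to `d N` are replaced by `d N` exactly. Regularity leaves at most
`2εN` exceptional vertices on each side, so every weighted degree is `δN + O(εN)`, and the weight
is spread uniformly over rectangles with sides of order `√ε N`. Its average may fall short of `δ`
by `O(ε)`, which is the loss allowed by `C`; below that value it can be scaled down to have total
weight exactly `d̄ N²`.

The total being an integer, pipage rounding turns this weight into an edge set of exactly that
size: shift mass between two fractional coordinates until one of them becomes integral. The
exponential moments in Chernoff's bound, for the degrees and for the rectangles, are concave along
such shifts, so the shift can be chosen not to increase the sum of them, which is less than `1` for
large `N` because `4 ^ N` rectangles are beaten by `exp (-cN²)`. Hence no degree and no large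
rectangle deviates.
-/

section Rounding

variable {α ι : Type*} {E : Finset α} {w : α → ℝ}

/-- `w` is a fractional subset of `E` of size `z`, i.e. a point of the hypersimplex
`{w ∈ [0, 1]^E | ∑ w = z}`, extended by zero to the whole type. -/
structure IsFractionalSubset (w : α → ℝ) (E : Finset α) (z : ℝ) : Prop where
  mem_Icc : ∀ x, w x ∈ Set.Icc (0 : ℝ) 1
  eq_zero_of_notMem : ∀ x ∉ E, w x = 0
  sum_eq : ∑ x ∈ E, w x = z

lemma IsFractionalSubset.smul {z θ : ℝ} (h : IsFractionalSubset w E z)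
    (hθ : θ ∈ Set.Icc (0 : ℝ) 1) : IsFractionalSubset (θ • w) E (θ * z) where
  mem_Icc x := ⟨mul_nonneg hθ.1 (h.mem_Icc x).1,
    mul_le_one₀ hθ.2 (h.mem_Icc x).1 (h.mem_Icc x).2⟩
  eq_zero_of_notMem x hx := by simp [h.eq_zero_of_notMem x hx]
  sum_eq := by simp only [Pi.smul_apply, smul_eq_mul, ← mul_sum, h.sum_eq]

/-- The coordinates of `w` in `E` that still have to be rounded. -/
noncomputable def fractionalCoords (w : α → ℝ) (E : Finset α) : Finset α :=
  {x ∈ E | w x ∈ Set.Ioo (0 : ℝ) 1}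

lemma mem_fractionalCoords {x : α} :
    x ∈ fractionalCoords w E ↔ x ∈ E ∧ 0 < w x ∧ w x < 1 := by
  simp [fractionalCoords]

lemma IsFractionalSubset.eq_zero_or_eq_one {z : ℝ} (h : IsFractionalSubset w E z) {x : α}
    (hx : x ∉ fractionalCoords w E) : w x = 0 ∨ w x = 1 := by
  by_cases hxE : x ∈ E
  · obtain ⟨h0, h1⟩ := h.mem_Icc x
    by_contra! hne
    exact hx <| mem_fractionalCoords.2 ⟨hxE, h0.lt_of_ne' hne.1, h1.lt_of_ne hne.2⟩
  · exact Or.inl (h.eq_zero_of_notMem x hxE)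

lemma IsFractionalSubset.exists_eq_indicator {z : ℕ} (h : IsFractionalSubset w E z)
    (hw : fractionalCoords w E = ∅) :
    ∃ T ⊆ E, #T = z ∧ w = (T : Set α).indicator 1 := by
  have hind : w = (({x ∈ E | w x = 1} : Finset α) : Set α).indicator 1 := by
    ext x
    by_cases hxE : x ∈ E
    · rcases h.eq_zero_or_eq_one (x := x) (by simp [hw]) with hx | hx <;>
        simp [Set.indicator, hxE, hx]
    · simp [Set.indicator, hxE, h.eq_zero_of_notMem x hxE]
  refine ⟨{x ∈ E | w x = 1}, filter_subset _ _, ?_, hind⟩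
  have hsum := h.sum_eq
  rw [hind, sum_indicator_subset _ (filter_subset _ _)] at hsum
  simpa using hsum

-- If only one coordinate were fractional, it would differ from an integer by a sum of integers.
lemma IsFractionalSubset.card_fractionalCoords_ne_one {z : ℕ} (h : IsFractionalSubset w E z) :
    #(fractionalCoords w E) ≠ 1 := by
  intro hcard
  obtain ⟨e, he⟩ := card_eq_one.1 hcard
  obtain ⟨heE, he0, he1⟩ := mem_fractionalCoords.1 (he ▸ mem_singleton_self e)
  have hint : ∑ x ∈ E.erase e, w x ∈ (Int.castAddHom ℝ).range := by
    refine sum_mem fun x hx => ?_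
    have hx' : x ∉ fractionalCoords w E := by simp [he, ne_of_mem_erase hx]
    rcases h.eq_zero_or_eq_one hx' with h0 | h1
    · exact ⟨0, by simp [h0]⟩
    · exact ⟨1, by simp [h1]⟩
  obtain ⟨k, hk⟩ := hint
  have hsum := add_sum_erase E w heE
  rw [← hk, h.sum_eq, Int.coe_castAddHom] at hsum
  have hlo : ((0 : ℤ) : ℝ) < ((z - k : ℤ) : ℝ) := by push_cast; linarith
  have hhi : ((z - k : ℤ) : ℝ) < ((1 : ℤ) : ℝ) := by push_cast; linarith
  have := Int.cast_lt.1 hlo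
  have := Int.cast_lt.1 hhi
  lia

/-- Move mass `s` from the coordinate `f` of `w` to the coordinate `e`. -/
noncomputable def shiftMass [DecidableEq α] (w : α → ℝ) (e f : α) (s : ℝ) : α → ℝ :=
  w + s • (Pi.single e 1 - Pi.single f 1)

section ShiftMass

variable [DecidableEq α] {e f : α} {s : ℝ}

lemma shiftMass_zero (w : α → ℝ) (e f : α) : shiftMass w e f 0 = w := by simp [shiftMass]

lemma shiftMass_neg (w : α → ℝ) (e f : α) (s : ℝ) : shiftMass w e f (-s) = shiftMass w f e s := by
  simp only [shiftMass, neg_smul, ← smul_neg, neg_sub]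

lemma shiftMass_apply_left (hef : e ≠ f) : shiftMass w e f s e = w e + s := by
  simp [shiftMass, hef]

lemma shiftMass_apply_right (hef : e ≠ f) : shiftMass w e f s f = w f - s := by
  simp [shiftMass, hef.symm, sub_eq_add_neg]

lemma shiftMass_apply_of_ne {x : α} (hxe : x ≠ e) (hxf : x ≠ f) : shiftMass w e f s x = w x := by
  simp [shiftMass, hxe, hxf]

lemma isFractionalSubset_shiftMass {z : ℝ} (h : IsFractionalSubset w E z) (he : e ∈ E)
    (hf : f ∈ E) (hef : e ≠ f) (hs : 0 ≤ s) (hse : s ≤ 1 - w e) (hsf : s ≤ w f) :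
    IsFractionalSubset (shiftMass w e f s) E z where
  mem_Icc x := by
    rcases eq_or_ne x e with rfl | hxe
    · rw [shiftMass_apply_left hef]
      exact ⟨add_nonneg (h.mem_Icc x).1 hs, by linarith⟩
    rcases eq_or_ne x f with rfl | hxf
    · rw [shiftMass_apply_right hef]
      exact ⟨by linarith, by linarith [(h.mem_Icc x).2]⟩
    · rw [shiftMass_apply_of_ne hxe hxf]
      exact h.mem_Icc x
  eq_zero_of_notMem x hx := by
    rw [shiftMass_apply_of_ne (ne_of_mem_of_not_mem he hx).symm (ne_of_mem_of_not_mem hf hx).symm,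
      h.eq_zero_of_notMem x hx]
  sum_eq := by
    simp [shiftMass, sum_add_distrib, ← mul_sum, he, hf, h.sum_eq]

lemma fractionalCoords_shiftMass_ssubset (he : e ∈ fractionalCoords w E)
    (hf : f ∈ fractionalCoords w E) (hef : e ≠ f) :
    fractionalCoords (shiftMass w e f (min (1 - w e) (w f))) E ⊂ fractionalCoords w E := by
  refine (ssubset_iff_of_subset fun x hx => ?_).2 ?_
  · rcases eq_or_ne x e with rfl | hxe
    · exact he
    rcases eq_or_ne x f with rfl | hxf
    · exact hf
    · rwa [mem_fractionalCoords, shiftMass_apply_of_ne hxe hxf, ← mem_fractionalCoords] at hx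
  · rcases min_choice (1 - w e) (w f) with hmin | hmin
    · exact ⟨e, he, by simp [mem_fractionalCoords, shiftMass_apply_left hef, hmin]⟩
    · exact ⟨f, hf, by simp [mem_fractionalCoords, shiftMass_apply_right hef, hmin]⟩

-- Pipage rounding: by concavity one of the two extreme shifts between two fractional
-- coordinates does not increase `F`, and it makes one of these coordinates integral.
theorem IsFractionalSubset.exists_indicator_le {z : ℕ} {F : (α → ℝ) → ℝ}
    (hF : ∀ w : α → ℝ, (∀ x, w x ∈ Set.Icc (0 : ℝ) 1) → ∀ e ∈ E, ∀ f ∈ E, e ≠ f →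
      ConcaveOn ℝ Set.univ fun s => F (shiftMass w e f s))
    (h : IsFractionalSubset w E z) :
    ∃ T ⊆ E, #T = z ∧ F ((T : Set α).indicator 1) ≤ F w := by
  induction hn : #(fractionalCoords w E) using Nat.strong_induction_on generalizing w with
  | _ n ih =>
    subst hn
    rcases (fractionalCoords w E).eq_empty_or_nonempty with hw | hw
    · obtain ⟨T, hTE, hTcard, rfl⟩ := h.exists_eq_indicator hw
      exact ⟨T, hTE, hTcard, le_rfl⟩
    have round_after_shift : ∀ e ∈ fractionalCoords w E, ∀ f ∈ fractionalCoords w E, e ≠ f →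
        ∃ T ⊆ E, #T = z ∧ F ((T : Set α).indicator 1) ≤
          F (shiftMass w e f (min (1 - w e) (w f))) := by
      intro e he f hf hef
      obtain ⟨heE, -, he1⟩ := mem_fractionalCoords.1 he
      obtain ⟨hfE, hf0, -⟩ := mem_fractionalCoords.1 hf
      exact ih _ (card_lt_card (fractionalCoords_shiftMass_ssubset he hf hef))
        (isFractionalSubset_shiftMass h heE hfE hef (le_min (by linarith) hf0.le)
          (min_le_left _ _) (min_le_right _ _)) rfl
    obtain ⟨e, he, f, hf, hef⟩ := one_lt_card.1
      ((Nat.one_le_iff_ne_zero.2 hw.card_ne_zero).lt_of_ne' h.card_fractionalCoords_ne_one)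
    obtain ⟨heE, he0, he1⟩ := mem_fractionalCoords.1 he
    obtain ⟨hfE, hf0, hf1⟩ := mem_fractionalCoords.1 hf
    have hmin := (hF w h.mem_Icc e heE f hfE hef).min_le_of_mem_Icc (z := 0)
      (x := -min (1 - w f) (w e)) (y := min (1 - w e) (w f)) trivial trivial
      ⟨neg_nonpos.2 (le_min (by linarith) he0.le), le_min (by linarith) hf0.le⟩
    rw [shiftMass_zero, shiftMass_neg] at hmin
    rcases min_le_iff.1 hmin with hle | hle
    · obtain ⟨T, hTE, hTcard, hT⟩ := round_after_shift f hf e he hef.symm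
      exact ⟨T, hTE, hTcard, hT.trans hle⟩
    · obtain ⟨T, hTE, hTcard, hT⟩ := round_after_shift e he f hf hef
      exact ⟨T, hTE, hTcard, hT.trans hle⟩

end ShiftMass

/-- The multilinear extension to `[0, 1]^E` of `T ↦ exp (∑ x ∈ T, a x)`; equivalently, the
exponential moment of `∑ x ∈ T, a x` for a random `T ⊆ E` that contains each `x` independently
with probability `w x`. -/
noncomputable def expExtension (E : Finset α) (a w : α → ℝ) : ℝ :=
  ∏ x ∈ E, (1 + w x * (Real.exp (a x) - 1))

lemma one_add_mul_exp_sub_one_nonneg {p : ℝ} (hp : p ∈ Set.Icc (0 : ℝ) 1) (a : ℝ) :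
    0 ≤ 1 + p * (Real.exp a - 1) := by
  nlinarith [hp.1, hp.2, mul_nonneg hp.1 (Real.exp_pos a).le]

lemma expExtension_indicator {T : Finset α} (hT : T ⊆ E) (a : α → ℝ) :
    expExtension E a ((T : Set α).indicator 1) = Real.exp (∑ x ∈ T, a x) := by
  rw [Real.exp_sum, expExtension, ← prod_subset hT fun x _ hx => by simp [hx]]
  exact prod_congr rfl fun x hx => by simp [hx]

lemma expExtension_le (hw : ∀ x, w x ∈ Set.Icc (0 : ℝ) 1) {a : α → ℝ} (ha : ∀ x, |a x| ≤ 1) :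
    expExtension E a w ≤ Real.exp (∑ x ∈ E, w x * (a x + a x ^ 2)) := by
  rw [Real.exp_sum]
  refine prod_le_prod (fun x _ => one_add_mul_exp_sub_one_nonneg (hw x) _) fun x _ => ?_
  have hexp : Real.exp (a x) - 1 ≤ a x + a x ^ 2 := by
    linarith [(abs_le.1 (Real.abs_exp_sub_one_sub_id_le (ha x))).2]
  linarith [mul_le_mul_of_nonneg_left hexp (hw x).1,
    Real.add_one_le_exp (w x * (a x + a x ^ 2))]

lemma concaveOn_quadratic (a b : ℝ) {c : ℝ} (hc : 0 ≤ c) :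
    ConcaveOn ℝ Set.univ fun s : ℝ => a + b * s - c * s ^ 2 := by
  refine ((concaveOn_const a convex_univ).add ?_).sub ((even_two.convexOn_pow).smul hc)
  exact (b • LinearMap.id (R := ℝ) (M := ℝ)).concaveOn convex_univ

lemma mul_exp_sub_one_nonneg {x y : ℝ} (h : 0 ≤ x * y) :
    0 ≤ (Real.exp x - 1) * (Real.exp y - 1) := by
  rcases mul_nonneg_iff.1 h with ⟨hx, hy⟩ | ⟨hx, hy⟩
  · exact mul_nonneg (by simpa using hx) (by simpa using hy)
  · exact mul_nonneg_of_nonpos_of_nonpos (by simpa using hx) (by simpa using hy)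

lemma concaveOn_expExtension_shiftMass [DecidableEq α] (hw : ∀ x, w x ∈ Set.Icc (0 : ℝ) 1)
    {e f : α} (he : e ∈ E) (hf : f ∈ E) (hef : e ≠ f) {a : α → ℝ} (ha : 0 ≤ a e * a f) :
    ConcaveOn ℝ Set.univ fun s => expExtension E a (shiftMass w e f s) := by
  set μ : α → ℝ := fun x => Real.exp (a x) - 1
  set R := ∏ x ∈ (E.erase e).erase f, (1 + w x * μ x)
  have hR0 : 0 ≤ R := prod_nonneg fun x _ => one_add_mul_exp_sub_one_nonneg (hw x) (a x)
  have hfactor : ∀ s, expExtension E a (shiftMass w e f s) =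
      (1 + (w e + s) * μ e) * ((1 + (w f - s) * μ f) * R) := by
    intro s
    rw [expExtension, ← mul_prod_erase E _ he,
      ← mul_prod_erase (E.erase e) _ (mem_erase.2 ⟨hef.symm, hf⟩), shiftMass_apply_left hef,
      shiftMass_apply_right hef]
    congr 2
    refine prod_congr rfl fun x hx => ?_
    rw [shiftMass_apply_of_ne (ne_of_mem_erase (mem_of_mem_erase hx)) (ne_of_mem_erase hx)]
  convert concaveOn_quadratic ((1 + w e * μ e) * (1 + w f * μ f) * R)
    ((μ e * (1 + w f * μ f) - μ f * (1 + w e * μ e)) * R)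
    (mul_nonneg (mul_exp_sub_one_nonneg ha) hR0) using 2 with s
  rw [hfactor]
  ring

-- The derandomized union bound: pipage rounding is applied to the sum of the exponential moments.
lemma IsFractionalSubset.exists_subset_sum_lt {z : ℕ} (h : IsFractionalSubset w E z)
    {I : Finset ι} {a : ι → α → ℝ} (ha : ∀ i ∈ I, ∀ x, |a i x| ≤ 1)
    (hsign : ∀ i ∈ I, ∀ x y, 0 ≤ a i x * a i y) {t : ι → ℝ}
    (hI : ∑ i ∈ I, Real.exp (∑ x ∈ E, w x * a i x ^ 2 - t i) < 1) :
    ∃ T ⊆ E, #T = z ∧ ∀ i ∈ I, ∑ x ∈ T, a i x < ∑ x ∈ E, w x * a i x + t i := by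
  set c : ι → ℝ := fun i => Real.exp (-(∑ x ∈ E, w x * a i x + t i))
  have hconcave : ∀ v : α → ℝ, (∀ x, v x ∈ Set.Icc (0 : ℝ) 1) → ∀ e ∈ E, ∀ f ∈ E, e ≠ f →
      ConcaveOn ℝ Set.univ fun s => ∑ i ∈ I, c i * expExtension E (a i) (shiftMass v e f s) := by
    intro v hv e he f hf hef
    simp only [← sum_fn]
    exact sum_induction _ (ConcaveOn ℝ Set.univ) (fun _ _ => ConcaveOn.add)
      (concaveOn_const 0 convex_univ) fun i hi =>
        (concaveOn_expExtension_shiftMass hv he hf hef (hsign i hi e f)).smul (Real.exp_pos _).le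
  obtain ⟨T, hTE, hTcard, hT⟩ := h.exists_indicator_le
    (F := fun v => ∑ i ∈ I, c i * expExtension E (a i) v) hconcave
  refine ⟨T, hTE, hTcard, fun i hi => ?_⟩
  have hmoment : ∀ i ∈ I, c i * expExtension E (a i) w ≤
      Real.exp (∑ x ∈ E, w x * a i x ^ 2 - t i) := by
    intro i hi
    calc c i * expExtension E (a i) w
        ≤ c i * Real.exp (∑ x ∈ E, w x * (a i x + a i x ^ 2)) :=
          mul_le_mul_of_nonneg_left (expExtension_le h.mem_Icc (ha i hi)) (Real.exp_pos _).le
      _ = Real.exp (∑ x ∈ E, w x * a i x ^ 2 - t i) := by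
          rw [← Real.exp_add]
          simp only [mul_add, sum_add_distrib]
          ring_nf
  have hlt : ∑ j ∈ I, Real.exp (∑ x ∈ T, a j x - (∑ x ∈ E, w x * a j x + t j)) < 1 := by
    refine lt_of_le_of_lt ?_ ((hT.trans (sum_le_sum hmoment)).trans_lt hI)
    simp only [expExtension_indicator hTE, c, ← Real.exp_add]
    exact (sum_congr rfl fun _ _ => by ring_nf).le
  have hle : Real.exp (∑ x ∈ T, a i x - (∑ x ∈ E, w x * a i x + t i)) ≤
      ∑ j ∈ I, Real.exp (∑ x ∈ T, a j x - (∑ x ∈ E, w x * a j x + t j)) :=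
    single_le_sum (f := fun j => Real.exp (∑ x ∈ T, a j x - (∑ x ∈ E, w x * a j x + t j)))
      (fun j _ => (Real.exp_pos _).le) hi
  exact sub_neg.1 (Real.exp_lt_one_iff.1 (hle.trans_lt hlt))

lemma IsFractionalSubset.sum_le_card {z : ℝ} (h : IsFractionalSubset w E z) (S : Finset α) :
    ∑ x ∈ S, w x ≤ #S := by
  simpa using sum_le_card_nsmul S w 1 fun x _ => (h.mem_Icc x).2

lemma IsFractionalSubset.sum_mul_ite_mem [DecidableEq α] {z : ℝ} (h : IsFractionalSubset w E z)
    (S : Finset α) (c : ℝ) : ∑ x ∈ E, w x * (if x ∈ S then c else 0) = c * ∑ x ∈ S, w x := by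
  simp only [mul_ite, mul_zero, sum_ite_mem, mul_sum]
  simp only [mul_comm (w _)]
  exact sum_subset inter_subset_right fun x hx hxE => by
    rw [h.eq_zero_of_notMem x fun hxE' => hxE (mem_inter.2 ⟨hxE', hx⟩), mul_zero]

-- The statistics `± ξ / 2 * #(T ∩ S i)` give both tails; `ξ / 2` optimizes the resulting exponent.
theorem IsFractionalSubset.exists_subset_abs_card_inter_sub_le [DecidableEq α] {z : ℕ}
    (h : IsFractionalSubset w E z) {I : Finset ι} {S : ι → Finset α} {ξ : ℝ} (hξ₀ : 0 < ξ)
    (hξ₂ : ξ ≤ 2) (hI : ∑ i ∈ I, 2 * Real.exp (-(ξ ^ 2 / 4 * #(S i))) < 1) :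
    ∃ T ⊆ E, #T = z ∧ ∀ i ∈ I, |(#(T ∩ S i) : ℝ) - ∑ x ∈ S i, w x| ≤ ξ * #(S i) := by
  set J : Finset (ι × ℝ) := I ×ˢ {ξ / 2, -(ξ / 2)}
  set a : ι × ℝ → α → ℝ := fun j x => if x ∈ S j.1 then j.2 else 0 with ha
  have ha_le : ∀ j ∈ J, ∀ x, |a j x| ≤ 1 := by
    rintro ⟨i, σ⟩ hj x
    have hσ : |σ| ≤ 1 := by
      rcases mem_insert.1 (mem_product.1 hj).2 with hσ | hσ
      · exact abs_le.2 (by constructor <;> linarith)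
      · exact abs_le.2 (by constructor <;> linarith [mem_singleton.1 hσ])
    simp only [ha]
    split_ifs <;> simp [hσ]
  have ha_sign : ∀ j ∈ J, ∀ x y, 0 ≤ a j x * a j y := fun j _ x y => by
    simp only [ha]
    split_ifs <;> simp [mul_self_nonneg]
  have hmoment : ∑ j ∈ J, Real.exp (∑ x ∈ E, w x * a j x ^ 2 - ξ ^ 2 / 2 * #(S j.1)) < 1 := by
    refine lt_of_le_of_lt ?_ hI
    simp only [J, ha, ite_pow, ne_eq, OfNat.ofNat_ne_zero, not_false_eq_true, zero_pow,
      h.sum_mul_ite_mem, sum_product]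
    refine sum_le_sum fun i _ => ?_
    rw [sum_pair (by linarith), neg_sq, ← two_mul]
    gcongr
    nlinarith [mul_le_mul_of_nonneg_left (h.sum_le_card (S i)) (sq_nonneg ξ)]
  obtain ⟨T, hTE, hTcard, hT⟩ := h.exists_subset_sum_lt ha_le ha_sign hmoment
  refine ⟨T, hTE, hTcard, fun i hi => ?_⟩
  have hupper := hT (i, ξ / 2) (by simp [J, hi])
  have hlower := hT (i, -(ξ / 2)) (by simp [J, hi])
  simp only [ha, h.sum_mul_ite_mem, sum_ite_mem, sum_const, nsmul_eq_mul] at hupper hlower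
  rw [abs_le]
  constructor <;> nlinarith

end Rounding

section NearUniform

variable {α β : Type*} {w : α × β → ℝ} {A : Finset α} {B : Finset β} {p p' η η' κ κ' : ℝ}

/-- The weight `w` on `A × B` is nearly uniform of density `p`: the average of `w` is within `η` of
`p` on every row and column, and within `κ` of `p` on every rectangle with sides at least `κ * #A`
and `κ * #B`. It is the weighted form of super-regularity, the two errors being tracked separately
and relatively to an arbitrary reference density `p`. -/
structure IsNearUniform (w : α × β → ℝ) (A : Finset α) (B : Finset β) (p η κ : ℝ) : Prop where
  abs_row_sub_le : ∀ u ∈ A, |∑ v ∈ B, w (u, v) - p * #B| ≤ η * #B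
  abs_col_sub_le : ∀ v ∈ B, |∑ u ∈ A, w (u, v) - p * #A| ≤ η * #A
  abs_rect_sub_le : ∀ X ⊆ A, ∀ Y ⊆ B, κ * #A ≤ #X → κ * #B ≤ #Y →
    |∑ x ∈ X ×ˢ Y, w x - p * (#X * #Y)| ≤ κ * (#X * #Y)

lemma IsNearUniform.mono (h : IsNearUniform w A B p η κ) (hη : η ≤ η') (hκ : κ ≤ κ') :
    IsNearUniform w A B p η' κ' where
  abs_row_sub_le u hu := (h.abs_row_sub_le u hu).trans (by gcongr)
  abs_col_sub_le v hv := (h.abs_col_sub_le v hv).trans (by gcongr)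
  abs_rect_sub_le X hX Y hY hXA hYB :=
    (h.abs_rect_sub_le X hX Y hY (le_trans (by gcongr) hXA) (le_trans (by gcongr) hYB)).trans
      (by gcongr)

lemma IsNearUniform.abs_sum_sub_le (h : IsNearUniform w A B p η κ) :
    |∑ x ∈ A ×ˢ B, w x - p * (#A * #B)| ≤ η * (#A * #B) := by
  calc |∑ x ∈ A ×ˢ B, w x - p * (#A * #B)|
      = |∑ u ∈ A, (∑ v ∈ B, w (u, v) - p * #B)| := by
        rw [sum_product, sum_sub_distrib, sum_const, nsmul_eq_mul, mul_left_comm]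
    _ ≤ ∑ u ∈ A, |∑ v ∈ B, w (u, v) - p * #B| := abs_sum_le_sum_abs _ _
    _ ≤ #A • (η * #B) := sum_le_card_nsmul _ _ _ h.abs_row_sub_le
    _ = η * (#A * #B) := by rw [nsmul_eq_mul, mul_left_comm]

lemma abs_mul_sub_mul_le {θ s m c : ℝ} (hθ : θ ∈ Set.Icc (0 : ℝ) 1) (hm : 0 ≤ m)
    (hs : |s - p * m| ≤ c * m) (hp : |θ * p - p'| ≤ η) : |θ * s - p' * m| ≤ (c + η) * m := by
  calc |θ * s - p' * m| = |θ * (s - p * m) + (θ * p - p') * m| := by ring_nf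
    _ ≤ |θ * (s - p * m)| + |(θ * p - p') * m| := abs_add_le _ _
    _ = θ * |s - p * m| + |θ * p - p'| * m := by
        rw [abs_mul, abs_mul, abs_of_nonneg hθ.1, abs_of_nonneg hm]
    _ ≤ 1 * (c * m) + η * m := by
        gcongr
        · exact hθ.2
    _ = (c + η) * m := by ring

lemma IsNearUniform.smul {θ ζ : ℝ} (h : IsNearUniform w A B p η κ) (hθ : θ ∈ Set.Icc (0 : ℝ) 1)
    (hp : |θ * p - p'| ≤ ζ) : IsNearUniform (θ • w) A B p' (η + ζ) (κ + ζ) := by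
  have hκ : κ ≤ κ + ζ := le_add_of_nonneg_right ((abs_nonneg _).trans hp)
  constructor
  · intro u hu
    simpa only [Pi.smul_apply, smul_eq_mul, mul_sum] using
      abs_mul_sub_mul_le hθ (by positivity) (h.abs_row_sub_le u hu) hp
  · intro v hv
    simpa only [Pi.smul_apply, smul_eq_mul, mul_sum] using
      abs_mul_sub_mul_le hθ (by positivity) (h.abs_col_sub_le v hv) hp
  · intro X hX Y hY hXA hYB
    simpa only [Pi.smul_apply, smul_eq_mul, mul_sum] using
      abs_mul_sub_mul_le hθ (by positivity) (h.abs_rect_sub_le X hX Y hY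
        (le_trans (by gcongr) hXA) (le_trans (by gcongr) hYB)) hp

lemma IsNearUniform.exists_rescale (h : IsNearUniform w A B p η κ) (hA : A.Nonempty)
    (hB : B.Nonempty) (hp'₀ : 0 ≤ p') (hp' : p' ≤ p - η) :
    ∃ θ ∈ Set.Icc (0 : ℝ) 1, θ * ∑ x ∈ A ×ˢ B, w x = p' * (#A * #B) ∧
      IsNearUniform (θ • w) A B p' (η + η) (κ + η) := by
  have hAB : (0 : ℝ) < #A * #B := by positivity
  have hlo := (abs_le.1 h.abs_sum_sub_le).1
  have hle : p' * (#A * #B) ≤ ∑ x ∈ A ×ˢ B, w x := by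
    linarith [mul_le_mul_of_nonneg_right hp' hAB.le]
  have hp'_nonneg : 0 ≤ p' * (#A * #B) := by positivity
  obtain ⟨θ, hθ, hθw⟩ : ∃ θ ∈ Set.Icc (0 : ℝ) 1, θ * ∑ x ∈ A ×ˢ B, w x = p' * (#A * #B) :=
    ⟨_, ⟨div_nonneg hp'_nonneg (hp'_nonneg.trans hle), div_le_one_of_le₀ hle
      (hp'_nonneg.trans hle)⟩, div_mul_cancel_of_imp fun h0 => by linarith⟩
  refine ⟨θ, hθ, hθw, h.smul hθ (le_of_mul_le_mul_right ?_ hAB)⟩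
  calc |θ * p - p'| * (#A * #B) = |(p' - θ * p) * (#A * #B)| := by
        rw [abs_mul, abs_of_pos hAB, abs_sub_comm]
    _ = |θ * (∑ x ∈ A ×ˢ B, w x - p * (#A * #B))| := by
        rw [mul_sub, hθw, sub_mul, mul_assoc θ]
    _ = θ * |∑ x ∈ A ×ˢ B, w x - p * (#A * #B)| := by rw [abs_mul, abs_of_nonneg hθ.1]
    _ ≤ 1 * (η * (#A * #B)) :=
        mul_le_mul hθ.2 h.abs_sum_sub_le (abs_nonneg _) zero_le_one
    _ = η * (#A * #B) := one_mul _

open Filter Topology in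
lemma eventually_unionBound_lt_one {c c' : ℝ} (hc : 0 < c) (hc' : 0 < c') :
    ∀ᶠ N : ℕ in atTop,
      4 * (N * Real.exp (-(c * N))) + 2 * (4 ^ N * Real.exp (-(c' * N ^ 2))) < 1 := by
  have hdegrees : Tendsto (fun N : ℕ => N * Real.exp (-(c * N))) atTop (𝓝 0) := by
    have := ((Real.tendsto_pow_mul_exp_neg_atTop_nhds_zero 1).comp
      (tendsto_natCast_atTop_atTop.const_mul_atTop hc)).const_mul c⁻¹
    simpa [Function.comp_def, hc.ne', mul_assoc] using this
  have hrectangles : Tendsto (fun N : ℕ => 4 ^ N * Real.exp (-(c' * N ^ 2))) atTop (𝓝 0) := by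
    have hlinear : Tendsto (fun N : ℕ => Real.log 4 - c' * N) atTop atBot :=
      tendsto_atBot_add_const_left _ _ <| tendsto_neg_atTop_atBot.comp
        (tendsto_natCast_atTop_atTop.const_mul_atTop hc')
    refine (Real.tendsto_exp_atBot.comp
      (tendsto_natCast_atTop_atTop.atTop_mul_atBot₀ hlinear)).congr fun N => ?_
    rw [Function.comp_apply, mul_sub, sub_eq_add_neg, Real.exp_add, Real.exp_nat_mul,
      Real.exp_log (by norm_num)]
    ring_nf
  have hsum := (hdegrees.const_mul 4).add (hrectangles.const_mul 2)
  exact hsum.eventually_lt_const (by norm_num)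

lemma sum_indicator_one_eq_card_inter {γ : Type*} [DecidableEq γ] (S T : Finset γ) :
    ∑ x ∈ S, (T : Set γ).indicator (1 : γ → ℝ) x = #(T ∩ S) := by
  simp [Set.indicator_apply, inter_comm]

lemma sum_exp_neg_card_product_le {N : ℕ} {ξ : ℝ} (hA : #A = N) (hB : #B = N) (hξ : 0 ≤ ξ) :
    ∑ P ∈ A.powerset ×ˢ B.powerset with ξ * #A ≤ #P.1 ∧ ξ * #B ≤ #P.2,
      2 * Real.exp (-(ξ ^ 2 / 4 * #(P.1 ×ˢ P.2))) ≤
        2 * (4 ^ N * Real.exp (-(ξ ^ 4 / 4 * N ^ 2))) := by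
  have hcard : #{P ∈ A.powerset ×ˢ B.powerset | ξ * #A ≤ #P.1 ∧ ξ * #B ≤ #P.2} ≤ 4 ^ N := by
    refine (card_filter_le _ _).trans_eq ?_
    rw [card_product, card_powerset, card_powerset, hA, hB, ← mul_pow]
    norm_num
  refine (sum_le_card_nsmul _ _ (2 * Real.exp (-(ξ ^ 4 / 4 * N ^ 2))) fun P hP => ?_).trans ?_
  · obtain ⟨-, hX, hY⟩ := mem_filter.1 hP
    rw [hA] at hX
    rw [hB] at hY
    have hXY : ξ * N * (ξ * N) ≤ #P.1 * #P.2 := by gcongr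
    rw [card_product, Nat.cast_mul]
    have hexponent : ξ ^ 4 / 4 * N ^ 2 ≤ ξ ^ 2 / 4 * (#P.1 * #P.2) := by
      linarith [mul_le_mul_of_nonneg_left hXY (sq_nonneg ξ)]
    exact mul_le_mul_of_nonneg_left (Real.exp_le_exp.2 (neg_le_neg hexponent)) zero_le_two
  · rw [nsmul_eq_mul, mul_left_comm]
    gcongr
    exact_mod_cast hcard

theorem IsNearUniform.exists_round {E : Finset (α × β)} {z N : ℕ} {ξ : ℝ}
    (h : IsNearUniform w A B p η κ) (hw : IsFractionalSubset w E z) (hA : #A = N)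
    (hB : #B = N) (hξ₀ : 0 < ξ) (hξ₂ : ξ ≤ 2) (hξκ : ξ ≤ κ)
    (hN : 4 * (N * Real.exp (-(ξ ^ 2 / 4 * N))) +
      2 * (4 ^ N * Real.exp (-(ξ ^ 4 / 4 * N ^ 2))) < 1) :
    ∃ T ⊆ E, #T = z ∧
      IsNearUniform ((T : Set (α × β)).indicator 1) A B p (η + ξ) (κ + ξ) := by
  set I : Finset (α ⊕ β ⊕ Finset α × Finset β) := A.disjSum (B.disjSum
    {P ∈ A.powerset ×ˢ B.powerset | ξ * #A ≤ #P.1 ∧ ξ * #B ≤ #P.2}) with hI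
  set S : α ⊕ β ⊕ Finset α × Finset β → Finset (α × β) :=
    Sum.elim (fun u => {u} ×ˢ B) (Sum.elim (fun v => A ×ˢ {v}) fun P => P.1 ×ˢ P.2) with hS
  have hunion : ∑ i ∈ I, 2 * Real.exp (-(ξ ^ 2 / 4 * #(S i))) < 1 := by
    refine lt_of_le_of_lt ?_ hN
    simp only [hI, hS, sum_disjSum, Sum.elim_inl, Sum.elim_inr, card_product, card_singleton,
      one_mul, mul_one, sum_const, hA, hB, nsmul_eq_mul]
    have := sum_exp_neg_card_product_le hA hB hξ₀.le
    simp only [card_product, hA, hB] at this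
    linarith
  obtain ⟨T, hTE, hTcard, hT⟩ := hw.exists_subset_abs_card_inter_sub_le hξ₀ hξ₂ hunion
  have hround : ∀ i ∈ I, ∀ m : ℝ, |∑ x ∈ S i, w x - p * #(S i)| ≤ m * #(S i) →
      |∑ x ∈ S i, (T : Set (α × β)).indicator 1 x - p * #(S i)| ≤ (m + ξ) * #(S i) := by
    intro i hi m hm
    rw [sum_indicator_one_eq_card_inter]
    exact (abs_sub_le _ _ _).trans (by linarith [hT i hi])
  refine ⟨T, hTE, hTcard, fun u hu => ?_, fun v hv => ?_, fun X hX Y hY hXA hYB => ?_⟩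
  · simpa [hS, sum_product] using hround (.inl u) (by simp [hI, hu]) η
      (by simpa [hS, sum_product] using h.abs_row_sub_le u hu)
  · simpa [hS, sum_product] using hround (.inr (.inl v)) (by simp [hI, hv]) η
      (by simpa [hS, sum_product] using h.abs_col_sub_le v hv)
  · have hXA' : κ * #A ≤ #X := le_trans (by gcongr; linarith) hXA
    have hYB' : κ * #B ≤ #Y := le_trans (by gcongr; linarith) hYB
    simpa [hS] using hround (.inr (.inr (X, Y)))
      (by simp only [hI, inr_mem_disjSum, mem_filter, mem_product, mem_powerset]
          exact ⟨⟨hX, hY⟩, le_trans (by gcongr) hXA', le_trans (by gcongr) hYB'⟩) κ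
      (by simpa [hS] using h.abs_rect_sub_le X hX Y hY hXA' hYB')

end NearUniform

section Graph

variable {V : Type} {G : SimpleGraph V} {A B X Y : Finset V} {ε δ η κ : ℝ} {N : ℕ}

lemma card_interedges_eq_sum (G : SimpleGraph V) (X Y : Finset V) :
    (#(G.interedges X Y) : ℝ) = ∑ u ∈ X, (#{v ∈ Y | G.Adj u v} : ℝ) := by
  rw [SimpleGraph.interedges, Rel.interedges, ← Nat.cast_sum]
  simp_rw [card_filter, sum_product]

lemma edgeDensityR_eq_edgeDensity (G : SimpleGraph V) (A B : Finset V) :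
    edgeDensityR G A B = G.edgeDensity A B := by
  rw [edgeDensityR, ← card_interedges_eq_sum, SimpleGraph.edgeDensity_def]
  push_cast
  rfl

lemma edgeDensityR_comm (G : SimpleGraph V) (A B : Finset V) :
    edgeDensityR G A B = edgeDensityR G B A := by
  rw [edgeDensityR_eq_edgeDensity, edgeDensityR_eq_edgeDensity, G.edgeDensity_comm]

lemma edgeDensityR_mul_card (G : SimpleGraph V) (A B : Finset V) :
    edgeDensityR G A B * (#A * #B) = #(G.interedges A B) := by
  rw [edgeDensityR, card_interedges_eq_sum]
  refine div_mul_cancel_of_imp fun h => ?_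
  rcases mul_eq_zero.1 h with h | h <;> rw [Nat.cast_eq_zero, card_eq_zero] at h <;> simp [h]

lemma edgeDensityR_le_one (G : SimpleGraph V) (A B : Finset V) : edgeDensityR G A B ≤ 1 := by
  rw [edgeDensityR_eq_edgeDensity]
  exact_mod_cast G.edgeDensity_le_one A B

lemma IsRegularPair.symm (h : IsRegularPair G A B ε) : IsRegularPair G B A ε :=
  fun Y hY X hX hYB hXA => by
    simpa only [edgeDensityR_comm G Y, edgeDensityR_comm G B] using h X hX Y hY hXA hYB

lemma IsSuperRegularPair.symm (h : IsSuperRegularPair G A B ε δ N) :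
    IsSuperRegularPair G B A ε δ N :=
  ⟨h.1.symm, h.2.2.1, h.2.1, h.2.2.2.2, h.2.2.2.1⟩

lemma IsRegularPair.abs_card_interedges_sub_le (h : IsRegularPair G A B ε) (hX : X ⊆ A)
    (hY : Y ⊆ B) (hXA : ε * #A ≤ #X) (hYB : ε * #B ≤ #Y) :
    |#(G.interedges X Y) - edgeDensityR G A B * (#X * #Y)| ≤ ε * (#X * #Y) := by
  rw [← edgeDensityR_mul_card, ← sub_mul, abs_mul,
    abs_of_nonneg (by positivity : (0 : ℝ) ≤ #X * #Y)]
  gcongr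
  exact h X hX Y hY hXA hYB

lemma IsSuperRegularPair.le_edgeDensityR (h : IsSuperRegularPair G A B ε δ N) (hN : 0 < N) :
    δ ≤ edgeDensityR G A B := by
  obtain ⟨-, hA, hB, hdeg, -⟩ := h
  have hN' : (0 : ℝ) < N * N := by positivity
  refine le_of_mul_le_mul_right ?_ hN'
  calc δ * (N * N) = ∑ _u ∈ A, δ * N := by rw [sum_const, hA, nsmul_eq_mul, mul_left_comm]
    _ ≤ ∑ u ∈ A, (#{v ∈ B | G.Adj u v} : ℝ) := sum_le_sum hdeg
    _ = edgeDensityR G A B * (N * N) := by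
        rw [← card_interedges_eq_sum, ← edgeDensityR_mul_card, hA, hB]

/-- The vertices of `A` whose degree into `B` deviates from `d * #B` by more than `ε * #B`, where
`d` is the density of `(A, B)`. -/
noncomputable def atypicalVertices (G : SimpleGraph V) (ε : ℝ) (A B : Finset V) : Finset V :=
  {u ∈ A | ε * #B < |#{v ∈ B | G.Adj u v} - edgeDensityR G A B * #B|}

-- Too many vertices deviating in the same direction would span with `B` an irregular pair.
lemma IsRegularPair.card_deviating_le (h : IsRegularPair G A B ε) (hε₀ : 0 ≤ ε) (hε₁ : ε ≤ 1)
    {σ : ℝ} (hσ : |σ| = 1) :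
    #{u ∈ A | ε * #B < σ * (#{v ∈ B | G.Adj u v} - edgeDensityR G A B * #B)} ≤ ε * #A := by
  set H := {u ∈ A | ε * #B < σ * (#{v ∈ B | G.Adj u v} - edgeDensityR G A B * #B)} with hH
  by_contra! hlarge
  have hne : H.Nonempty :=
    card_pos.1 (Nat.cast_pos.1 ((by positivity : (0 : ℝ) ≤ ε * #A).trans_lt hlarge))
  have hreg := h.abs_card_interedges_sub_le (filter_subset _ A) Subset.rfl hlarge.le
    (mul_le_of_le_one_left (by positivity) hε₁)
  refine hreg.not_gt ?_
  calc ε * (#H * #B) = ∑ _u ∈ H, ε * #B := by rw [sum_const, nsmul_eq_mul, mul_left_comm]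
    _ < ∑ u ∈ H, σ * (#{v ∈ B | G.Adj u v} - edgeDensityR G A B * #B) :=
        sum_lt_sum_of_nonempty hne fun u hu => (mem_filter.1 hu).2
    _ = σ * (#(G.interedges H B) - edgeDensityR G A B * (#H * #B)) := by
        rw [← mul_sum, sum_sub_distrib, ← card_interedges_eq_sum, sum_const, nsmul_eq_mul,
          mul_left_comm]
    _ ≤ |#(G.interedges H B) - edgeDensityR G A B * (#H * #B)| := by
        rw [← one_mul |_|, ← hσ, ← abs_mul]
        exact le_abs_self _

lemma IsRegularPair.card_atypicalVertices_le (h : IsRegularPair G A B ε) (hε₀ : 0 ≤ ε)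
    (hε₁ : ε ≤ 1) : #(atypicalVertices G ε A B) ≤ 2 * ε * #A := by
  have hsub : atypicalVertices G ε A B ⊆
      {u ∈ A | ε * #B < 1 * (#{v ∈ B | G.Adj u v} - edgeDensityR G A B * #B)} ∪
      {u ∈ A | ε * #B < -1 * (#{v ∈ B | G.Adj u v} - edgeDensityR G A B * #B)} := by
    rw [← filter_or]
    exact monotone_filter_right _ fun u _ hu => by
      rwa [one_mul, neg_one_mul, ← lt_abs]
  have hcard : (#(atypicalVertices G ε A B) : ℝ) ≤ _ :=
    Nat.cast_le.2 ((card_le_card hsub).trans (card_union_le _ _))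
  rw [Nat.cast_add] at hcard
  linarith [h.card_deviating_le hε₀ hε₁ (σ := 1) (by simp),
    h.card_deviating_le hε₀ hε₁ (σ := -1) (by simp)]

lemma IsRegularPair.card_atypical_interedges_le (h : IsRegularPair G A B ε) (hε₀ : 0 ≤ ε)
    (hε₁ : ε ≤ 1) (X Y : Finset V) :
    #{x ∈ G.interedges X Y | x.1 ∈ atypicalVertices G ε A B ∨ x.2 ∈ atypicalVertices G ε B A} ≤
      2 * ε * #A * #Y + 2 * ε * #B * #X := by
  have hsub : {x ∈ G.interedges X Y |
      x.1 ∈ atypicalVertices G ε A B ∨ x.2 ∈ atypicalVertices G ε B A} ⊆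
        atypicalVertices G ε A B ×ˢ Y ∪ X ×ˢ atypicalVertices G ε B A := by
    intro x hx
    obtain ⟨hxE, hatypical⟩ := mem_filter.1 hx
    obtain ⟨hxX, hxY, -⟩ := (SimpleGraph.mem_interedges_iff G).1 hxE
    rw [mem_union, mem_product, mem_product]
    exact hatypical.imp (⟨·, hxY⟩) (⟨hxX, ·⟩)
  refine (Nat.cast_le.2 ((card_le_card hsub).trans (card_union_le _ _))).trans ?_
  rw [card_product, card_product]
  push_cast
  calc (#(atypicalVertices G ε A B) * #Y + #X * #(atypicalVertices G ε B A) : ℝ)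
      ≤ 2 * ε * #A * #Y + #X * (2 * ε * #B) := by
        gcongr
        · exact h.card_atypicalVertices_le hε₀ hε₁
        · exact h.symm.card_atypicalVertices_le hε₀ hε₁
    _ = 2 * ε * #A * #Y + 2 * ε * #B * #X := by ring

/-- The degree of `u` into `B`, replaced by its typical value `d * #B` when `u` is a typical vertex
of the pair `(A, B)` of density `d`. -/
noncomputable def flattenedDegree (G : SimpleGraph V) (ε : ℝ) (A B : Finset V) (u : V) : ℝ :=
  if u ∈ atypicalVertices G ε A B then #{v ∈ B | G.Adj u v} else edgeDensityR G A B * #B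

lemma flattenedDegree_of_notMem {u : V} (hu : u ∉ atypicalVertices G ε A B) :
    flattenedDegree G ε A B u = edgeDensityR G A B * #B :=
  if_neg hu

lemma abs_degree_sub_flattenedDegree_le (hε : 0 ≤ ε) {u : V} (hu : u ∈ A) :
    |#{v ∈ B | G.Adj u v} - flattenedDegree G ε A B u| ≤ ε * #B := by
  rw [flattenedDegree]
  split_ifs with hatypical
  · rw [sub_self, abs_zero]
    positivity
  · exact not_lt.1 fun hlt => hatypical (mem_filter.2 ⟨hu, hlt⟩)

lemma IsSuperRegularPair.le_flattenedDegree (h : IsSuperRegularPair G A B ε δ N) (hN : 0 < N)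
    {u : V} (hu : u ∈ A) : δ * #B ≤ flattenedDegree G ε A B u := by
  rw [flattenedDegree]
  split_ifs
  · exact h.2.2.1 ▸ h.2.2.2.1 u hu
  · gcongr
    exact h.le_edgeDensityR hN

/-- The weight on the edges `(u, v)` of the pair `(A, B)` that brings all weighted degrees close to
`δ * #A = δ * #B`: it is `δ * d * #A * #B / (deg u * deg v)` with flattened degrees, truncated
at `1`. Thus an edge between typical vertices receives `δ / d`, and an edge from `u` to a typical
vertex receives `δ * #B / deg u`. -/
noncomputable def equalizingWeight (G : SimpleGraph V) (ε δ : ℝ) (A B : Finset V)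
    (x : V × V) : ℝ :=
  if x ∈ G.interedges A B then
    min 1 (δ * edgeDensityR G A B * (#A * #B) /
      (flattenedDegree G ε A B x.1 * flattenedDegree G ε B A x.2))
  else 0

lemma equalizingWeight_swap (x : V × V) :
    equalizingWeight G ε δ A B x.swap = equalizingWeight G ε δ B A x := by
  have hmem : x.swap ∈ G.interedges A B ↔ x ∈ G.interedges B A := G.swap_mem_interedges_iff
  simp only [equalizingWeight, hmem, Prod.fst_swap, Prod.snd_swap, edgeDensityR_comm G A B,
    mul_comm (#A : ℝ), mul_comm (flattenedDegree G ε A B _)]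

lemma equalizingWeight_of_notMem {x : V × V} (hx : x ∉ G.interedges A B) :
    equalizingWeight G ε δ A B x = 0 :=
  if_neg hx

lemma IsSuperRegularPair.equalizingWeight_mem_Icc (h : IsSuperRegularPair G A B ε δ N)
    (hδ : 0 < δ) (hN : 0 < N) (x : V × V) :
    equalizingWeight G ε δ A B x ∈ Set.Icc (0 : ℝ) 1 := by
  rw [equalizingWeight]
  split_ifs with hx
  · obtain ⟨hu, hv, -⟩ := SimpleGraph.mem_interedges_iff G |>.1 hx
    have := hδ.trans_le (h.le_edgeDensityR hN)
    have : 0 ≤ flattenedDegree G ε A B x.1 :=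
      (by positivity : 0 ≤ δ * (#B : ℝ)).trans (h.le_flattenedDegree hN hu)
    have : 0 ≤ flattenedDegree G ε B A x.2 :=
      (by positivity : 0 ≤ δ * (#A : ℝ)).trans (h.symm.le_flattenedDegree hN hv)
    exact ⟨le_min zero_le_one (by positivity), min_le_left _ _⟩
  · exact ⟨le_rfl, zero_le_one⟩

lemma IsSuperRegularPair.equalizingWeight_of_typical_right (h : IsSuperRegularPair G A B ε δ N)
    (hδ : 0 < δ) (hN : 0 < N) {u v : V} (huv : (u, v) ∈ G.interedges A B)
    (hv : v ∉ atypicalVertices G ε B A) :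
    equalizingWeight G ε δ A B (u, v) = δ * #B / flattenedDegree G ε A B u := by
  have hd := (hδ.trans_le (h.le_edgeDensityR hN)).ne'
  have hA : (#A : ℝ) ≠ 0 := by rw [h.2.1]; positivity
  have hB : (0 : ℝ) < #B := by rw [h.2.2.1]; positivity
  have hD := h.le_flattenedDegree hN (SimpleGraph.mem_interedges_iff G |>.1 huv).1
  have hratio : δ * edgeDensityR G A B * (#A * #B) /
      (flattenedDegree G ε A B u * flattenedDegree G ε B A v) =
        δ * #B / flattenedDegree G ε A B u := by
    rw [flattenedDegree_of_notMem hv, edgeDensityR_comm G B A]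
    have := ((mul_pos hδ hB).trans_le hD).ne'
    field_simp
  rw [equalizingWeight, if_pos huv, hratio, min_eq_right (div_le_one_of_le₀ hD
    ((mul_pos hδ hB).le.trans hD))]

lemma IsSuperRegularPair.equalizingWeight_of_typical (h : IsSuperRegularPair G A B ε δ N)
    (hδ : 0 < δ) (hN : 0 < N) {u v : V} (huv : (u, v) ∈ G.interedges A B)
    (hu : u ∉ atypicalVertices G ε A B) (hv : v ∉ atypicalVertices G ε B A) :
    equalizingWeight G ε δ A B (u, v) = δ / edgeDensityR G A B := by
  have hB : (#B : ℝ) ≠ 0 := by rw [h.2.2.1]; positivity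
  rw [h.equalizingWeight_of_typical_right hδ hN huv hv, flattenedDegree_of_notMem hu,
    mul_div_mul_right _ _ hB]

lemma abs_sum_sub_mul_card_le {ι : Type*} {s : Finset ι} {f : ι → ℝ} {c : ℝ} (P : ι → Prop)
    [DecidablePred P]
    (hf : ∀ i, f i ∈ Set.Icc (0 : ℝ) 1) (hc : c ∈ Set.Icc (0 : ℝ) 1)
    (hP : ∀ i ∈ s, ¬P i → f i = c) : |∑ i ∈ s, f i - c * #s| ≤ #{i ∈ s | P i} := by
  calc |∑ i ∈ s, f i - c * #s| = |∑ i ∈ s, (f i - c)| := by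
        rw [sum_sub_distrib, sum_const, nsmul_eq_mul, mul_comm c]
    _ ≤ ∑ i ∈ s, |f i - c| := abs_sum_le_sum_abs _ _
    _ ≤ ∑ i ∈ s, if P i then (1 : ℝ) else 0 := by
        refine sum_le_sum fun i hi => ?_
        split_ifs with hPi
        · exact abs_sub_le_of_nonneg_of_le (hf i).1 (hf i).2 hc.1 hc.2
        · rw [hP i hi hPi, sub_self, abs_zero]
    _ = #{i ∈ s | P i} := sum_boole _ _

lemma IsSuperRegularPair.abs_row_equalizingWeight_sub_le (h : IsSuperRegularPair G A B ε δ N)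
    (hε₀ : 0 ≤ ε) (hε₁ : ε ≤ 1) (hδ : 0 < δ) (hN : 0 < N) {u : V} (hu : u ∈ A) :
    |∑ v ∈ B, equalizingWeight G ε δ A B (u, v) - δ * #B| ≤ 3 * ε * #B := by
  set D := flattenedDegree G ε A B u
  set Γ := {v ∈ B | G.Adj u v}
  have hB : (0 : ℝ) < #B := by rw [h.2.2.1]; positivity
  have hD : δ * #B ≤ D := h.le_flattenedDegree hN hu
  have hD₀ : 0 < D := (mul_pos hδ hB).trans_le hD
  have hq : δ * #B / D ∈ Set.Icc (0 : ℝ) 1 := ⟨by positivity, div_le_one_of_le₀ hD hD₀.le⟩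
  have hsum : ∑ v ∈ B, equalizingWeight G ε δ A B (u, v) =
      ∑ v ∈ Γ, equalizingWeight G ε δ A B (u, v) := by
    refine (sum_subset (filter_subset _ _) fun v _ hvΓ => equalizingWeight_of_notMem ?_).symm
    rw [SimpleGraph.mk_mem_interedges_iff]
    exact fun huv => hvΓ (mem_filter.2 huv.2)
  have htypical : |∑ v ∈ Γ, equalizingWeight G ε δ A B (u, v) - δ * #B / D * #Γ| ≤ 2 * ε * #B := by
    refine (abs_sum_sub_mul_card_le (· ∈ atypicalVertices G ε B A)
      (fun v => h.equalizingWeight_mem_Icc hδ hN (u, v)) hq fun v hv hvtyp =>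
        h.equalizingWeight_of_typical_right hδ hN
          (SimpleGraph.mk_mem_interedges_iff G |>.2 ⟨hu, mem_filter.1 hv⟩) hvtyp).trans ?_
    refine le_trans (Nat.cast_le.2 (card_le_card fun v hv => (mem_filter.1 hv).2))
      (h.symm.1.card_atypicalVertices_le hε₀ hε₁)
  have hdegree : |δ * #B / D * #Γ - δ * #B| ≤ ε * #B := by
    calc |δ * #B / D * #Γ - δ * #B| = |δ * #B / D * (#Γ - D)| := by
          rw [mul_sub, div_mul_cancel₀ _ hD₀.ne']
      _ = δ * #B / D * |#Γ - D| := by rw [abs_mul, abs_of_nonneg hq.1]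
      _ ≤ 1 * (ε * #B) := mul_le_mul hq.2 (abs_degree_sub_flattenedDegree_le hε₀ hu)
          (abs_nonneg _) zero_le_one
      _ = ε * #B := one_mul _
  rw [hsum]
  linarith [abs_sub_le (∑ v ∈ Γ, equalizingWeight G ε δ A B (u, v)) (δ * #B / D * #Γ) (δ * #B)]

lemma sum_product_equalizingWeight (A B X Y : Finset V) :
    ∑ x ∈ X ×ˢ Y, equalizingWeight G ε δ A B x =
      ∑ x ∈ G.interedges X Y, equalizingWeight G ε δ A B x := by
  refine (sum_subset (filter_subset _ _) fun x hx hxE =>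
    equalizingWeight_of_notMem fun hxE' => ?_).symm
  obtain ⟨hxX, hxY⟩ := mem_product.1 hx
  exact hxE ((SimpleGraph.mem_interedges_iff G).2
    ⟨hxX, hxY, ((SimpleGraph.mem_interedges_iff G).1 hxE').2.2⟩)

lemma IsSuperRegularPair.abs_sum_equalizingWeight_sub_le (h : IsSuperRegularPair G A B ε δ N)
    (hε₀ : 0 ≤ ε) (hε₁ : ε ≤ 1) (hδ : 0 < δ) (hN : 0 < N) (hX : X ⊆ A) (hY : Y ⊆ B)
    (hXA : ε * #A ≤ #X) (hYB : ε * #B ≤ #Y) :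
    |∑ x ∈ X ×ˢ Y, equalizingWeight G ε δ A B x - δ * (#X * #Y)| ≤
      2 * ε * #A * #Y + 2 * ε * #B * #X + ε * (#X * #Y) := by
  set d := edgeDensityR G A B
  have hδd : δ ≤ d := h.le_edgeDensityR hN
  have hd : 0 < d := hδ.trans_le hδd
  have hq : δ / d ∈ Set.Icc (0 : ℝ) 1 := ⟨by positivity, div_le_one_of_le₀ hδd hd.le⟩
  have hregular : |δ / d * #(G.interedges X Y) - δ * (#X * #Y)| ≤ ε * (#X * #Y) := by
    calc |δ / d * #(G.interedges X Y) - δ * (#X * #Y)|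
        = |δ / d * (#(G.interedges X Y) - d * (#X * #Y))| := by
          rw [mul_sub, ← mul_assoc (δ / d), div_mul_cancel₀ _ hd.ne']
      _ = δ / d * |#(G.interedges X Y) - d * (#X * #Y)| := by rw [abs_mul, abs_of_nonneg hq.1]
      _ ≤ 1 * (ε * (#X * #Y)) := mul_le_mul hq.2
          (h.1.abs_card_interedges_sub_le hX hY hXA hYB) (abs_nonneg _) zero_le_one
      _ = ε * (#X * #Y) := one_mul _
  have htypical := abs_sum_sub_mul_card_le (s := G.interedges X Y)
    (fun x => x.1 ∈ atypicalVertices G ε A B ∨ x.2 ∈ atypicalVertices G ε B A)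
    (h.equalizingWeight_mem_Icc hδ hN) hq fun x hx hxtyp =>
      h.equalizingWeight_of_typical hδ hN (SimpleGraph.interedges_mono G hX hY hx)
        (fun hu => hxtyp (.inl hu)) fun hv => hxtyp (.inr hv)
  rw [sum_product_equalizingWeight A B]
  linarith [h.1.card_atypical_interedges_le hε₀ hε₁ X Y,
    abs_sub_le (∑ x ∈ G.interedges X Y, equalizingWeight G ε δ A B x)
      (δ / d * #(G.interedges X Y)) (δ * (#X * #Y))]

theorem IsSuperRegularPair.isNearUniform_equalizingWeight (h : IsSuperRegularPair G A B ε δ N)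
    (hε₀ : 0 ≤ ε) (hε₁ : ε ≤ 1) (hδ : 0 < δ) (hN : 0 < N) :
    IsNearUniform (equalizingWeight G ε δ A B) A B δ (3 * ε) (3 * Real.sqrt ε) where
  abs_row_sub_le u hu := h.abs_row_equalizingWeight_sub_le hε₀ hε₁ hδ hN hu
  abs_col_sub_le v hv := by
    simpa only [← equalizingWeight_swap (A := A), Prod.swap_prod_mk] using
      h.symm.abs_row_equalizingWeight_sub_le hε₀ hε₁ hδ hN hv
  abs_rect_sub_le X hX Y hY hXA hYB := by
    set s := Real.sqrt ε
    have hs : s * s = ε := Real.mul_self_sqrt hε₀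
    have hs₀ : 0 ≤ s := Real.sqrt_nonneg _
    have hs₁ : s ≤ 1 := Real.sqrt_le_one.2 hε₁
    have hεs : ε ≤ s := by nlinarith
    have hXA' : ε * #A ≤ #X := le_trans (by gcongr; linarith) hXA
    have hYB' : ε * #B ≤ #Y := le_trans (by gcongr; linarith) hYB
    refine (h.abs_sum_equalizingWeight_sub_le hε₀ hε₁ hδ hN hX hY hXA' hYB').trans ?_
    have hAY : 3 * ε * #A * #Y ≤ s * (#X * #Y) := by
      calc 3 * ε * #A * #Y = s * (3 * s * #A * #Y) := by rw [← hs]; ring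
        _ ≤ s * (#X * #Y) := by gcongr
    have hBX : 3 * ε * #B * #X ≤ s * (#X * #Y) := by
      calc 3 * ε * #B * #X = s * (#X * (3 * s * #B)) := by rw [← hs]; ring
        _ ≤ s * (#X * #Y) := by gcongr
    have hXY : ε * (#X * #Y) ≤ s * (#X * #Y) := by gcongr
    have hsXY : 0 ≤ s * (#X * #Y) := by positivity
    linarith

lemma IsSuperRegularPair.isFractionalSubset_equalizingWeight (h : IsSuperRegularPair G A B ε δ N)
    (hδ : 0 < δ) (hN : 0 < N) :
    IsFractionalSubset (equalizingWeight G ε δ A B) (G.interedges A B)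
      (∑ x ∈ A ×ˢ B, equalizingWeight G ε δ A B x) where
  mem_Icc := h.equalizingWeight_mem_Icc hδ hN
  eq_zero_of_notMem _ := equalizingWeight_of_notMem
  sum_eq := (sum_product_equalizingWeight A B A B).symm

lemma exists_le_interedges_eq (hAB : Disjoint A B) {T : Finset (V × V)}
    (hT : T ⊆ G.interedges A B) : ∃ G' ≤ G, G'.interedges A B = T := by
  refine ⟨SimpleGraph.fromRel fun u v => (u, v) ∈ T, fun u v huv => ?_, ?_⟩
  · rcases ((SimpleGraph.fromRel_adj _ _ _).1 huv).2 with huv | hvu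
    · exact ((SimpleGraph.mem_interedges_iff G).1 (hT huv)).2.2
    · exact ((SimpleGraph.mem_interedges_iff G).1 (hT hvu)).2.2.symm
  · ext ⟨u, v⟩
    rw [SimpleGraph.mk_mem_interedges_iff, SimpleGraph.fromRel_adj]
    constructor
    · rintro ⟨hu, -, -, huv | hvu⟩
      · exact huv
      · exact (disjoint_left.1 hAB hu ((SimpleGraph.mem_interedges_iff G).1 (hT hvu)).2.1).elim
    · intro huv
      obtain ⟨hu, hv, hadj⟩ := (SimpleGraph.mem_interedges_iff G).1 (hT huv)
      exact ⟨hu, hv, hadj.ne, .inl huv⟩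

lemma sum_indicator_interedges (hX : X ⊆ A) (hY : Y ⊆ B) :
    ∑ x ∈ X ×ˢ Y, (G.interedges A B : Set (V × V)).indicator (1 : V × V → ℝ) x =
      #(G.interedges X Y) := by
  rw [sum_indicator_one_eq_card_inter]
  congr 2
  ext x
  simp only [mem_inter, SimpleGraph.mem_interedges_iff, mem_product]
  exact ⟨fun h => ⟨h.2.1, h.2.2, h.1.2.2⟩, fun h => ⟨⟨hX h.1, hY h.2.1, h.2.2⟩, h.1, h.2.1⟩⟩

lemma sum_row_indicator_interedges {u : V} (hu : u ∈ A) :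
    ∑ v ∈ B, (G.interedges A B : Set (V × V)).indicator (1 : V × V → ℝ) (u, v) =
      #{v ∈ B | G.Adj u v} := by
  have h := sum_indicator_interedges (G := G) (singleton_subset_iff.2 hu) (Subset.refl B)
  rwa [sum_product, sum_singleton, card_interedges_eq_sum, sum_singleton] at h

lemma sum_col_indicator_interedges {v : V} (hv : v ∈ B) :
    ∑ u ∈ A, (G.interedges A B : Set (V × V)).indicator (1 : V × V → ℝ) (u, v) =
      #{u ∈ A | G.Adj v u} := by
  have h := sum_indicator_interedges (G := G) (Subset.refl A) (singleton_subset_iff.2 hv)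
  rwa [sum_product_right, sum_singleton, ← edgeDensityR_mul_card, edgeDensityR_comm,
    mul_comm (#A : ℝ), edgeDensityR_mul_card, card_interedges_eq_sum, sum_singleton] at h

lemma IsNearUniform.isRegularPair
    (h : IsNearUniform ((G.interedges A B : Set (V × V)).indicator 1) A B
      (edgeDensityR G A B) η κ) (hκ : 0 < κ) (hA : A.Nonempty) (hB : B.Nonempty) :
    IsRegularPair G A B κ := by
  intro X hX Y hY hXA hYB
  have hX₀ : (0 : ℝ) < #X := (by positivity : 0 < κ * #A).trans_le hXA
  have hY₀ : (0 : ℝ) < #Y := (by positivity : 0 < κ * #B).trans_le hYB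
  have hrect := h.abs_rect_sub_le X hX Y hY hXA hYB
  rw [sum_indicator_interedges hX hY, ← edgeDensityR_mul_card, ← sub_mul, abs_mul,
    abs_of_pos (mul_pos hX₀ hY₀)] at hrect
  exact le_of_mul_le_mul_right hrect (mul_pos hX₀ hY₀)

lemma IsNearUniform.isEpsSuperRegularPair
    (h : IsNearUniform ((G.interedges A B : Set (V × V)).indicator 1) A B
      (edgeDensityR G A B) κ κ) (hκ : 0 < κ) (hN : 0 < N) (hA : #A = N) (hB : #B = N) :
    IsEpsSuperRegularPair G A B κ N := by
  refine ⟨h.isRegularPair hκ (card_pos.1 (hA ▸ hN)) (card_pos.1 (hB ▸ hN)), hA, hB,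
    fun u hu => ?_, fun v hv => ?_⟩
  · have hrow := h.abs_row_sub_le u hu
    rw [sum_row_indicator_interedges hu, hB, abs_le] at hrow
    constructor <;> linarith
  · have hcol := h.abs_col_sub_le v hv
    rw [sum_col_indicator_interedges hv, hA, abs_le] at hcol
    constructor <;> linarith

theorem IsSuperRegularPair.exists_isEpsSuperRegularPair (h : IsSuperRegularPair G A B ε δ N)
    (hAB : Disjoint A B) (hε : 0 < ε) (hN : 0 < N)
    (hunion : 4 * (N * Real.exp (-(ε ^ 2 / 4 * N))) +
      2 * (4 ^ N * Real.exp (-(ε ^ 4 / 4 * N ^ 2))) < 1)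
    {p : ℝ} (hp : p ≤ δ - 3 * ε) {z : ℕ} (hz : p * N ^ 2 = z) :
    ∃ G' ≤ G, edgeDensityR G' A B = p ∧ IsEpsSuperRegularPair G' A B (7 * Real.sqrt ε) N := by
  have hp₀ : 0 ≤ p := nonneg_of_mul_nonneg_left (hz ▸ z.cast_nonneg) (by positivity)
  have hδ : 0 < δ := by linarith
  have hε₁ : ε ≤ 1 := by linarith [h.le_edgeDensityR hN, edgeDensityR_le_one G A B]
  have hεs : ε ≤ Real.sqrt ε := Real.le_sqrt_of_sq_le (by nlinarith)
  have hA : A.Nonempty := card_pos.1 (h.2.1 ▸ hN)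
  have hB : B.Nonempty := card_pos.1 (h.2.2.1 ▸ hN)
  obtain ⟨θ, hθ, hsum, huniform⟩ :=
    (h.isNearUniform_equalizingWeight hε.le hε₁ hδ hN).exists_rescale hA hB hp₀ hp
  have hfrac := (h.isFractionalSubset_equalizingWeight hδ hN).smul hθ
  rw [hsum, h.2.1, h.2.2.1, ← sq, hz] at hfrac
  obtain ⟨T, hTE, hTcard, hT⟩ := huniform.exists_round hfrac h.2.1 h.2.2.1 hε (by linarith)
    (by linarith) hunion
  obtain ⟨G', hG', rfl⟩ := exists_le_interedges_eq hAB hTE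
  have hdensity : edgeDensityR G' A B = p := by
    have hN' : (0 : ℝ) < N * N := by positivity
    refine mul_right_cancel₀ hN'.ne' ?_
    have := edgeDensityR_mul_card G' A B
    rwa [h.2.1, h.2.2.1, hTcard, ← hz, sq] at this
  refine ⟨G', hG', hdensity, ?_⟩
  rw [← hdensity] at hT
  exact (hT.mono (by linarith) (by linarith)).isEpsSuperRegularPair (by positivity) hN h.2.1 h.2.2.1

end Graph

theorem super_regular_subgraph_exact_density_general :
    ∃ C C' : ℝ, 0 < C ∧ 0 < C' ∧
      ∀ ε : ℝ, 0 < ε →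
        ∃ N₀ : ℕ, ∀ N : ℕ, N₀ ≤ N →
          ∀ (V : Type) (G : SimpleGraph V) (X₁ X₂ : Finset V) (δ : ℝ),
            Disjoint X₁ X₂ → IsSuperRegularPair G X₁ X₂ ε δ N →
            ∀ dbar : ℝ, dbar ≤ δ - C * ε →
              (∃ z : ℕ, dbar * (N : ℝ) ^ 2 = (z : ℝ)) →
              ∃ G' : SimpleGraph V, G' ≤ G ∧
                edgeDensityR G' X₁ X₂ = dbar ∧
                IsEpsSuperRegularPair G' X₁ X₂ (C' * Real.sqrt ε) N := by
  refine ⟨3, 7, by norm_num, by norm_num, fun ε hε => ?_⟩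
  obtain ⟨N₀, hN₀⟩ := Filter.eventually_atTop.1 ((Filter.eventually_gt_atTop 0).and
    (eventually_unionBound_lt_one (c := ε ^ 2 / 4) (c' := ε ^ 4 / 4) (by positivity)
      (by positivity)))
  exact ⟨N₀, fun N hN V G X₁ X₂ δ hdisj h dbar hdbar ⟨z, hz⟩ =>
    h.exists_isEpsSuperRegularPair hdisj hε (hN₀ N hN).1 (hN₀ N hN).2 hdbar hz⟩

theorem super_regular_subgraph_exact_density :
    ∃ C C' : ℝ, 0 < C ∧ 0 < C' ∧
      ∀ ε δ : ℝ, 0 < ε → 0 < δ →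
        ∃ N₀ : ℕ, ∀ N : ℕ, N₀ ≤ N →
          ∀ (V : Type) [Fintype V] (G : SimpleGraph V) (X₁ X₂ : Finset V),
            Disjoint X₁ X₂ → X₁ ∪ X₂ = univ →
            (∀ u v : V, G.Adj u v → (u ∈ X₁ ∧ v ∈ X₂) ∨ (u ∈ X₂ ∧ v ∈ X₁)) →
            IsSuperRegularPair G X₁ X₂ ε δ N →
            ∀ dbar : ℝ, 0 < dbar → dbar ≤ δ - C * ε →
              (∃ z : ℕ, dbar * (N : ℝ) ^ 2 = (z : ℝ)) →
              ∃ G' : SimpleGraph V, G' ≤ G ∧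
                edgeDensityR G' X₁ X₂ = dbar ∧
                IsEpsSuperRegularPair G' X₁ X₂ (C' * Real.sqrt ε) N := by
  obtain ⟨C, C', hC, hC', h⟩ := super_regular_subgraph_exact_density_general
  exact ⟨C, C', hC, hC', fun ε δ hε _ => (h ε hε).imp
    fun N₀ hN₀ N hN V _ G X₁ X₂ hdisj _ _ hreg dbar _ =>
      hN₀ N hN V G X₁ X₂ δ hdisj hreg dbar⟩
end

section
/- For every d₀ > 0 there exist ε > 0 and a constant C = C(d₀) such that the following holds. Let G be an ε-super-regular bipartite graph with parts of size m and density d ≥ d₀. Then there exists a (C/m)-spread probability distribution μ over the perfect matchings of G. -/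
open Finset
open scoped Classical

/-!
Let every vertex pick `K` random neighbours, where `K` depends only on the density. A set
violating Hall's condition in the graph of picked edges would have all its picks confined to a
smaller set, and a union bound makes this unlikely: a small set is confined to few choices
compared with the degrees, while for a large set regularity provides many vertices with many
neighbours outside the smaller set. So with probability at least `1 / 2` the picked edges contain
a perfect matching, which we choose after conditioning on this event. Each of `k` edges of that
matching was picked by one of its ends, and these ends are distinct, so `k` given edges occur with
probability at most `2 * 2 ^ k * (K / (δ m)) ^ k`, where `δ m` is a lower bound for the degrees.
-/

namespace SpreadMatching

section UniformProb

/-- The probability that a uniformly random element of `s` satisfies `p`; it is `0` if `s` is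
empty. -/
noncomputable def uniformProb {α : Type*} (s : Finset α) (p : α → Prop) : ℝ :=
  #{x ∈ s | p x} / #s

variable {α : Type*} {s : Finset α} {p q : α → Prop}

lemma uniformProb_nonneg : 0 ≤ uniformProb s p := by
  unfold uniformProb
  positivity

lemma uniformProb_le_one : uniformProb s p ≤ 1 :=
  div_le_one_of_le₀ (by exact_mod_cast card_filter_le s p) (Nat.cast_nonneg _)

lemma uniformProb_mono (h : ∀ x ∈ s, p x → q x) : uniformProb s p ≤ uniformProb s q := by
  unfold uniformProb
  gcongr with x hx
  exact h x hx

lemma exists_of_uniformProb_pos (h : 0 < uniformProb s p) : ∃ x ∈ s, p x := by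
  by_contra! hs
  rw [uniformProb, filter_false_of_mem hs, card_empty, Nat.cast_zero, zero_div] at h
  exact h.false

lemma uniformProb_not (hs : s.Nonempty) :
    uniformProb s (fun x => ¬ p x) = 1 - uniformProb s p := by
  have hs0 : (#s : ℝ) ≠ 0 := by exact_mod_cast hs.card_pos.ne'
  rw [uniformProb, uniformProb, eq_sub_iff_add_eq', ← add_div, ← Nat.cast_add,
    card_filter_add_card_filter_not, div_self hs0]

lemma uniformProb_or_le (p q : α → Prop) :
    uniformProb s (fun x => p x ∨ q x) ≤ uniformProb s p + uniformProb s q := by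
  simp only [uniformProb, ← add_div]
  gcongr
  rw [filter_or]
  exact_mod_cast card_union_le _ _

lemma uniformProb_exists_mem_le_sum {ι : Type*} (I : Finset ι) (p : ι → α → Prop) :
    uniformProb s (fun x => ∃ i ∈ I, p i x) ≤ ∑ i ∈ I, uniformProb s (p i) := by
  have hunion : {x ∈ s | ∃ i ∈ I, p i x} = I.biUnion fun i => {x ∈ s | p i x} := by
    ext x
    simp only [mem_filter, mem_biUnion]
    tauto
  have hcard : (#{x ∈ s | ∃ i ∈ I, p i x} : ℝ) ≤ ∑ i ∈ I, (#{x ∈ s | p i x} : ℝ) := by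
    rw [hunion]
    exact_mod_cast card_biUnion_le
  simp only [uniformProb, ← sum_div]
  gcongr

lemma uniformProb_exists_mem_le {ι : Type*} (I : Finset ι) (p : ι → α → Prop) {c : ℝ}
    (h : ∀ i ∈ I, uniformProb s (p i) ≤ c) :
    uniformProb s (fun x => ∃ i ∈ I, p i x) ≤ #I * c := by
  simpa only [nsmul_eq_mul] using
    (uniformProb_exists_mem_le_sum I p).trans (sum_le_card_nsmul I _ c h)

lemma uniformProb_exists_le {ι : Type*} [Fintype ι] (p : ι → α → Prop) {c : ℝ}
    (h : ∀ i, uniformProb s (p i) ≤ c) :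
    uniformProb s (fun x => ∃ i, p i x) ≤ Fintype.card ι * c := by
  simpa only [mem_univ, true_and, card_univ] using
    uniformProb_exists_mem_le univ p fun i _ => h i

lemma uniformProb_piFinset {ι : Type*} [Fintype ι] [DecidableEq ι] {κ : ι → Type*}
    (t : ∀ i, Finset (κ i)) (p : ∀ i, κ i → Prop) :
    uniformProb (Fintype.piFinset t) (fun f => ∀ i, p i (f i)) = ∏ i, uniformProb (t i) (p i) := by
  have hfilter : {f ∈ Fintype.piFinset t | ∀ i, p i (f i)} =
      Fintype.piFinset fun i => {x ∈ t i | p i x} := by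
    ext f
    simp only [mem_filter, Fintype.mem_piFinset, forall_and]
  simp only [uniformProb, hfilter, Fintype.card_piFinset, Nat.cast_prod, prod_div_distrib]

lemma uniformProb_piFinset_le {ι : Type*} [Fintype ι] [DecidableEq ι] {κ : ι → Type*}
    (t : ∀ i, Finset (κ i)) (p : ∀ i, κ i → Prop) (I : Finset ι) {r : ℝ}
    (h : ∀ i ∈ I, uniformProb (t i) (p i) ≤ r) :
    uniformProb (Fintype.piFinset t) (fun f => ∀ i ∈ I, p i (f i)) ≤ r ^ #I := by
  calc uniformProb (Fintype.piFinset t) (fun f => ∀ i ∈ I, p i (f i))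
      = ∏ i, uniformProb (t i) (fun x => i ∈ I → p i x) :=
        uniformProb_piFinset t fun i x => i ∈ I → p i x
    _ ≤ ∏ i, if i ∈ I then r else 1 := by
        refine prod_le_prod (fun _ _ => uniformProb_nonneg) fun i _ => ?_
        split_ifs with hi
        · simpa only [hi, forall_const] using h i hi
        · exact uniformProb_le_one
    _ = r ^ #I := by rw [prod_ite_mem, univ_inter, prod_const]

lemma uniformProb_le_card_div_card {t : Finset α} (h : ∀ x ∈ s, p x → x ∈ t) :
    uniformProb s p ≤ #t / #s := by
  unfold uniformProb
  gcongr
  exact fun x hx => h x (mem_filter.1 hx).1 (mem_filter.1 hx).2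

lemma card_div_card_le_uniformProb {t : Finset α} (hts : t ⊆ s) (h : ∀ x ∈ t, p x) :
    (#t : ℝ) / #s ≤ uniformProb s p := by
  unfold uniformProb
  gcongr
  exact fun x hx => mem_filter.2 ⟨hts hx, h x hx⟩

lemma uniformProb_exists_coord_eq_le (s : Finset α) (b : α) (K : ℕ) :
    uniformProb (Fintype.piFinset fun _ : Fin K => s) (fun x => ∃ j, x j = b) ≤ K / #s := by
  have hone : uniformProb s (fun x => x = b) ≤ (#s : ℝ)⁻¹ := by
    simpa only [card_singleton, Nat.cast_one, one_div] using
      uniformProb_le_card_div_card (t := {b}) fun _ _ hx => mem_singleton.2 hx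
  rw [div_eq_mul_inv]
  conv_rhs => rw [← Fintype.card_fin K]
  refine uniformProb_exists_le _ fun j => ?_
  simpa only [mem_singleton, forall_eq, card_singleton, pow_one] using
    uniformProb_piFinset_le (fun _ : Fin K => s) (fun _ x => x = b) {j}
      fun _ _ => hone

end UniformProb

section Picks

variable {V : Type*} [Fintype V] {G : SimpleGraph V} {K : ℕ}

/-- The functions assigning to every vertex of `G` an ordered `K`-tuple of neighbours, repetitions
allowed: the sample space in which all vertices choose `K` random neighbours independently. -/
noncomputable def picks (G : SimpleGraph V) (K : ℕ) : Finset (V → Fin K → V) :=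
  Fintype.piFinset fun v => Fintype.piFinset fun _ => G.neighborFinset v

/-- The graph whose edges join each vertex to the vertices it has picked. -/
def pickGraph (f : V → Fin K → V) : SimpleGraph V :=
  SimpleGraph.fromRel fun u v => ∃ j, f u j = v

lemma mem_picks {f : V → Fin K → V} : f ∈ picks G K ↔ ∀ v j, G.Adj v (f v j) := by
  simp only [picks, Fintype.mem_piFinset, SimpleGraph.mem_neighborFinset]

lemma pickGraph_adj_of_mem_picks {f : V → Fin K → V} (hf : f ∈ picks G K) (v : V) (j : Fin K) :
    (pickGraph f).Adj v (f v j) :=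
  (SimpleGraph.fromRel_adj _ _ _).2 ⟨(mem_picks.1 hf v j).ne, Or.inl ⟨j, rfl⟩⟩

lemma pickGraph_le {f : V → Fin K → V} (hf : f ∈ picks G K) : pickGraph f ≤ G := by
  rintro u v ⟨-, ⟨j, rfl⟩ | ⟨j, rfl⟩⟩
  · exact mem_picks.1 hf u j
  · exact (mem_picks.1 hf v j).symm

lemma picks_nonempty (h : ∀ v, 0 < G.degree v) : (picks G K).Nonempty := by
  refine Fintype.piFinset_nonempty.2 fun v => Fintype.piFinset_nonempty.2 fun _ => ?_
  rw [← card_pos, SimpleGraph.card_neighborFinset_eq_degree]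
  exact h v

lemma uniformProb_picks_confined_le {S W : Finset V} {r : ℝ}
    (h : ∀ v ∈ S, uniformProb (G.neighborFinset v) (· ∈ W) ≤ r) :
    uniformProb (picks G K) (fun f => ∀ v ∈ S, ∀ j, f v j ∈ W) ≤ (r ^ K) ^ #S := by
  refine uniformProb_piFinset_le (fun v => Fintype.piFinset fun _ : Fin K => G.neighborFinset v)
    (fun _ x => ∀ j, x j ∈ W) S fun v hv => ?_
  simpa only [mem_univ, forall_const, card_univ, Fintype.card_fin] using
    uniformProb_piFinset_le (fun _ : Fin K => G.neighborFinset v) (fun _ w => w ∈ W) univ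
      fun _ _ => h v hv

lemma uniformProb_picks_hitting_le {ι : Type*} [Fintype ι] {c y : ι → V} (hc : c.Injective) {D : ℝ}
    (hD : 0 < D) (hdeg : ∀ v, D ≤ G.degree v) :
    uniformProb (picks G K) (fun f => ∀ i, ∃ j, f (c i) j = y i) ≤ (K / D) ^ Fintype.card ι := by
  rw [picks]
  have h := uniformProb_piFinset_le (fun v => Fintype.piFinset fun _ : Fin K => G.neighborFinset v)
    (fun v x => ∀ i, c i = v → ∃ j, x j = y i) (univ.image c) (r := K / D) <| by
      simp only [mem_image, mem_univ, true_and]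
      rintro _ ⟨i, rfl⟩
      simp only [hc.eq_iff, forall_eq]
      refine (uniformProb_exists_coord_eq_le _ _ _).trans ?_
      rw [SimpleGraph.card_neighborFinset_eq_degree]
      gcongr
      exact hdeg _
  simpa only [mem_image, mem_univ, true_and, forall_exists_index, forall_apply_eq_imp_iff,
    hc.eq_iff, forall_eq, card_image_of_injective _ hc, card_univ] using h

-- Each of the edges was picked by one of its two ends; the union bound runs over these ends.
lemma uniformProb_picks_adj_le {ι : Type*} [Fintype ι] {x : ι × Bool → V} (hx : x.Injective) {D : ℝ}
    (hD : 0 < D) (hdeg : ∀ v, D ≤ G.degree v) :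
    uniformProb (picks G K) (fun f => ∀ i, (pickGraph f).Adj (x (i, true)) (x (i, false))) ≤
      (2 * K / D) ^ Fintype.card ι := by
  have hpicker : ∀ f ∈ picks G K,
      (∀ i, (pickGraph f).Adj (x (i, true)) (x (i, false))) →
        ∃ σ : ι → Bool, ∀ i, ∃ j, f (x (i, σ i)) j = x (i, !σ i) := by
    intro f _ hf
    have hend : ∀ i, ∃ b : Bool, ∃ j, f (x (i, b)) j = x (i, !b) := fun i => by
      obtain ⟨-, h | h⟩ := (SimpleGraph.fromRel_adj _ _ _).1 (hf i)
      · exact ⟨true, h⟩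
      · exact ⟨false, h⟩
    choose σ hσ using hend
    exact ⟨σ, hσ⟩
  calc uniformProb (picks G K) (fun f => ∀ i, (pickGraph f).Adj (x (i, true)) (x (i, false)))
      ≤ uniformProb (picks G K)
          (fun f => ∃ σ : ι → Bool, ∀ i, ∃ j, f (x (i, σ i)) j = x (i, !σ i)) :=
        uniformProb_mono hpicker
    _ ≤ Fintype.card (ι → Bool) * (K / D) ^ Fintype.card ι :=
        uniformProb_exists_le _ fun σ => uniformProb_picks_hitting_le (c := fun i => x (i, σ i))
          (fun i i' h => congrArg Prod.fst (hx h)) hD hdeg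
    _ = (2 * K / D) ^ Fintype.card ι := by
        rw [Fintype.card_fun, Fintype.card_bool, Nat.cast_pow, Nat.cast_ofNat, ← mul_pow,
          mul_div_assoc]

end Picks

section Spread

variable {V : Type*} [Fintype V] {G H : SimpleGraph V} {K : ℕ}

/-- A random perfect matching `μ` of `G` is `q`-spread if any `k` distinct edges lie in it
simultaneously with probability at most `q ^ k`. -/
def IsSpread (μ : PMF {M : G.Subgraph // M.IsPerfectMatching}) (q : ℝ) : Prop :=
  ∀ (k : ℕ) (e : Fin k → Sym2 V), Function.Injective e → (∀ i, e i ∈ G.edgeSet) →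
    μ.toOuterMeasure {M | ∀ i, e i ∈ (M : G.Subgraph).edgeSet} ≤ ENNReal.ofReal (q ^ k)

lemma exists_injective_ends {V : Type*} {G : SimpleGraph V} {M : G.Subgraph} (hM : M.IsMatching)
    {ι : Type*} {e : ι → Sym2 V} (he : e.Injective) (heM : ∀ i, e i ∈ M.edgeSet) :
    ∃ x : ι × Bool → V, x.Injective ∧ ∀ i, e i = s(x (i, true), x (i, false)) := by
  have hends : ∀ i, ∃ a b, e i = s(a, b) := fun i => (e i).ind fun a b => ⟨a, b, rfl⟩
  choose a b hab using hends
  set x : ι × Bool → V := fun p => if p.2 then a p.1 else b p.1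
  have hex : ∀ i c, e i = s(x (i, c), x (i, !c)) := by
    rintro i (_ | _)
    · exact (hab i).trans Sym2.eq_swap
    · exact hab i
  have hadj : ∀ i c, M.Adj (x (i, c)) (x (i, !c)) := fun i c => by
    simpa only [hex i c, SimpleGraph.Subgraph.mem_edgeSet] using heM i
  refine ⟨x, ?_, fun i => hex i true⟩
  rintro ⟨i, c⟩ ⟨i', c'⟩ h
  have hother : x (i, !c) = x (i', !c') := hM.eq_of_adj_left (hadj i c) (h ▸ hadj i' c')
  obtain rfl : i = i' := he (by rw [hex i c, hex i' c', h, hother])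
  by_contra hne
  obtain rfl : c' = !c := by
    rw [Bool.eq_not]
    rintro rfl
    exact hne rfl
  exact (hadj i c).ne h

lemma uniformProb_picks_matching_le {k : ℕ} {e : Fin k → Sym2 V} (he : e.Injective) {D : ℝ}
    (hD : 0 < D) (hdeg : ∀ v, D ≤ H.degree v) :
    uniformProb (picks H K) (fun f => ∃ M : G.Subgraph,
      M.IsMatching ∧ M.spanningCoe ≤ pickGraph f ∧ ∀ i, e i ∈ M.edgeSet) ≤ (2 * K / D) ^ k := by
  by_cases hM : ∃ M : G.Subgraph, M.IsMatching ∧ ∀ i, e i ∈ M.edgeSet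
  · obtain ⟨M₀, hM₀, heM₀⟩ := hM
    obtain ⟨x, hx, hex⟩ := exists_injective_ends hM₀ he heM₀
    calc uniformProb (picks H K) (fun f => ∃ M : G.Subgraph,
          M.IsMatching ∧ M.spanningCoe ≤ pickGraph f ∧ ∀ i, e i ∈ M.edgeSet)
        ≤ uniformProb (picks H K)
            (fun f => ∀ i, (pickGraph f).Adj (x (i, true)) (x (i, false))) := by
          refine uniformProb_mono ?_
          rintro f - ⟨M, -, hMf, heM⟩ i
          exact hMf (by simpa only [hex i, SimpleGraph.Subgraph.mem_edgeSet,
            SimpleGraph.Subgraph.spanningCoe_adj] using heM i)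
      _ ≤ (2 * K / D) ^ k := by
          simpa only [Fintype.card_fin] using uniformProb_picks_adj_le hx hD hdeg
  · refine (uniformProb_mono (q := fun _ => False) ?_).trans ?_
    · rintro f - ⟨M, hM', -, heM⟩
      exact hM ⟨M, hM', heM⟩
    · simp only [uniformProb, filter_false, card_empty, Nat.cast_zero, zero_div]
      positivity

lemma toOuterMeasure_uniformOfFinset_eq {α : Type*} (s : Finset α) (hs : s.Nonempty) (t : Set α) :
    (PMF.uniformOfFinset s hs).toOuterMeasure t = ENNReal.ofReal (uniformProb s (· ∈ t)) := by
  rw [PMF.toOuterMeasure_uniformOfFinset_apply, uniformProb,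
    ENNReal.ofReal_div_of_pos (by exact_mod_cast hs.card_pos), ENNReal.ofReal_natCast,
    ENNReal.ofReal_natCast]

lemma uniformProb_filter {α : Type*} (s : Finset α) (p q : α → Prop) [DecidablePred p] :
    uniformProb {x ∈ s | p x} q = uniformProb s (fun x => p x ∧ q x) / uniformProb s p := by
  rcases s.eq_empty_or_nonempty with rfl | hs
  · simp only [uniformProb, filter_empty, card_empty, Nat.cast_zero, div_zero]
  · have hs0 : (#s : ℝ) ≠ 0 := by exact_mod_cast hs.card_pos.ne'
    rw [uniformProb, uniformProb, uniformProb, div_div_div_cancel_right₀ hs0, filter_filter]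
    congr!

theorem exists_isSpread {D : ℝ} (hD : 0 < D) (hdeg : ∀ v, D ≤ H.degree v)
    (hgood : 1 / 2 ≤ uniformProb (picks H K)
      (fun f => ∃ M : G.Subgraph, M.IsPerfectMatching ∧ M.spanningCoe ≤ pickGraph f)) :
    ∃ μ : PMF {M : G.Subgraph // M.IsPerfectMatching}, IsSpread μ (4 * K / D) := by
  set good : (V → Fin K → V) → Prop := fun f =>
    ∃ M : G.Subgraph, M.IsPerfectMatching ∧ M.spanningCoe ≤ pickGraph f
  obtain ⟨f₀, hf₀, M₀, hM₀, hMf₀⟩ := exists_of_uniformProb_pos (hgood.trans_lt' one_half_pos)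
  have hne : ({f ∈ picks H K | good f}).Nonempty := ⟨f₀, mem_filter.2 ⟨hf₀, M₀, hM₀, hMf₀⟩⟩
  have hchoice : ∀ f, ∃ M : {M : G.Subgraph // M.IsPerfectMatching},
      good f → M.1.spanningCoe ≤ pickGraph f := by
    intro f
    by_cases hf : good f
    · obtain ⟨M, hM, hMf⟩ := hf
      exact ⟨⟨M, hM⟩, fun _ => hMf⟩
    · exact ⟨⟨M₀, hM₀⟩, fun h => absurd h hf⟩
  choose F hF using hchoice
  refine ⟨(PMF.uniformOfFinset _ hne).map F, fun k e he _ => ?_⟩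
  rw [PMF.toOuterMeasure_map_apply, toOuterMeasure_uniformOfFinset_eq]
  refine ENNReal.ofReal_le_ofReal ?_
  rcases k.eq_zero_or_pos with rfl | hk
  · simpa only [pow_zero] using uniformProb_le_one
  have hedges : uniformProb (picks H K) (fun f => good f ∧ ∀ i, e i ∈ (F f).1.edgeSet) ≤
      (2 * K / D) ^ k :=
    (uniformProb_mono fun f _ hf => ⟨(F f).1, (F f).2.1, hF f hf.1, hf.2⟩).trans
      (uniformProb_picks_matching_le (G := G) he hD hdeg)
  rw [uniformProb_filter]
  calc uniformProb (picks H K) (fun f => good f ∧ ∀ i, e i ∈ (F f).1.edgeSet) /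
          uniformProb (picks H K) good
      ≤ (2 * K / D) ^ k / (1 / 2) := by gcongr
    _ = 2 * (2 * K / D) ^ k := by ring
    _ ≤ 2 ^ k * (2 * K / D) ^ k := by
        gcongr
        exact le_self_pow₀ one_le_two hk.ne'
    _ = (4 * K / D) ^ k := by rw [← mul_pow]; ring

end Spread

section Hall

variable {V : Type*} {A B : Finset V}

lemma isBipartiteWith_of_le {H G : SimpleGraph V} {s t : Set V} (hG : G.IsBipartiteWith s t)
    (hle : H ≤ G) : H.IsBipartiteWith s t :=
  ⟨hG.disjoint, fun _ _ h => hG.mem_of_adj (hle h)⟩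

/-- `f` has a small trap from `A` to `B` if the picks of some `S ⊆ A`, where `S` is at most half of
`A` (rounded up), are confined to a subset of `B` smaller than `S`. Every violation of Hall's
condition by such an `S` in the pick graph gives a small trap. -/
def HasSmallTrap {K : ℕ} (A B : Finset V) (f : V → Fin K → V) : Prop :=
  ∃ S ⊆ A, ∃ W ⊆ B, 2 * #S ≤ #A + 1 ∧ #W < #S ∧ ∀ v ∈ S, ∀ j, f v j ∈ W

lemma HasSmallTrap.exists_confined {K : ℕ} {f : V → Fin K → V} (hf : HasSmallTrap A B f)
    (hcard : #A = #B) : ∃ r ∈ range ((#A + 1) / 2),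
      ∃ p ∈ A.powersetCard (r + 1) ×ˢ B.powersetCard r, ∀ v ∈ p.1, ∀ j, f v j ∈ p.2 := by
  obtain ⟨S, hS, W, hW, hSA, hWS, hconf⟩ := hf
  obtain ⟨W', hWW', hW'B, hW'⟩ := exists_subsuperset_card_eq hW (n := #S - 1) (by omega)
    (by have := card_le_card hS; omega)
  refine ⟨#S - 1, mem_range.2 (by omega), (S, W'), ?_, fun v hv j => hWW' (hconf v hv j)⟩
  simp only [mem_product, mem_powersetCard]
  exact ⟨⟨hS, by omega⟩, hW'B, hW'⟩

variable [Fintype V]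

/-- The neighbourhood of a vertex set `S`: all vertices adjacent to some vertex of `S`. -/
noncomputable def neighborhood (H : SimpleGraph V) (S : Finset V) : Finset V :=
  {w | ∃ v ∈ S, H.Adj v w}

lemma mem_neighborhood {H : SimpleGraph V} {S : Finset V} {w : V} :
    w ∈ neighborhood H S ↔ ∃ v ∈ S, H.Adj v w := by
  simp only [neighborhood, mem_filter_univ]

lemma neighborhood_mono {H : SimpleGraph V} {S T : Finset V} (h : S ⊆ T) :
    neighborhood H S ⊆ neighborhood H T := fun _ hw =>
  mem_neighborhood.2 <| (mem_neighborhood.1 hw).imp fun _ hv => hv.imp_left (h ·)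

lemma neighborhood_subset {H : SimpleGraph V} (hH : H.IsBipartiteWith (A : Set V) B)
    {S : Finset V} (hS : S ⊆ A) : neighborhood H S ⊆ B := by
  intro w hw
  obtain ⟨v, hv, hvw⟩ := mem_neighborhood.1 hw
  exact mod_cast hH.mem_of_mem_adj (mod_cast hS hv) hvw

-- If a large set `S` violates Hall's condition, then so does `B \ neighborhood H S`, cut down to
-- half of `B` if necessary, on the other side.
lemma card_le_card_neighborhood_of_forall_small {H : SimpleGraph V}
    (hH : H.IsBipartiteWith (A : Set V) B) (hcard : #A = #B)
    (hA : ∀ S ⊆ A, 2 * #S ≤ #A + 1 → #S ≤ #(neighborhood H S))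
    (hB : ∀ T ⊆ B, 2 * #T ≤ #B + 1 → #T ≤ #(neighborhood H T))
    {S : Finset V} (hS : S ⊆ A) : #S ≤ #(neighborhood H S) := by
  by_contra! hlt
  have hlarge : #A + 1 < 2 * #S := by
    by_contra! hsmall
    exact (hA S hS hsmall).not_gt hlt
  obtain ⟨T, hT, hTcard⟩ := exists_subset_card_eq
    (min_le_left #(B \ neighborhood H S) ((#B + 1) / 2))
  have hTB : T ⊆ B := hT.trans sdiff_subset
  have hNT : neighborhood H T ⊆ A \ S := by
    refine subset_sdiff.2 ⟨neighborhood_subset hH.symm hTB, ?_⟩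
    rw [Finset.disjoint_right]
    intro v hvS hvT
    obtain ⟨w, hw, hwv⟩ := mem_neighborhood.1 hvT
    exact (mem_sdiff.1 (hT hw)).2 (mem_neighborhood.2 ⟨v, hvS, hwv.symm⟩)
  have hTle : #T ≤ #A - #S :=
    (hB T hTB (by omega)).trans ((card_le_card hNT).trans_eq (card_sdiff_of_subset hS))
  rw [card_sdiff_of_subset (neighborhood_subset hH hS)] at hTcard
  have := card_le_card hS
  omega

theorem exists_isPerfectMatching_of_forall_small {H : SimpleGraph V}
    (hH : H.IsBipartiteWith (A : Set V) B) (hAB : IsCompl A B) (hcard : #A = #B)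
    (hA : ∀ S ⊆ A, 2 * #S ≤ #A + 1 → #S ≤ #(neighborhood H S))
    (hB : ∀ T ⊆ B, 2 * #T ≤ #B + 1 → #T ≤ #(neighborhood H T)) :
    ∃ M : H.Subgraph, M.IsPerfectMatching := by
  refine SimpleGraph.exists_isPerfectMatching_of_forall_ncard_le hH fun s => ?_
  obtain ⟨S, rfl⟩ := s.toFinite.exists_finset_coe
  have hS : S = S ∩ A ∪ S ∩ B := by
    rw [← inter_union_distrib_left, ← sup_eq_union, hAB.sup_eq_top, top_eq_univ, inter_univ]
  have hdisj : Disjoint (neighborhood H (S ∩ A)) (neighborhood H (S ∩ B)) :=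
    hAB.disjoint.symm.mono (neighborhood_subset hH inter_subset_right)
      (neighborhood_subset hH.symm inter_subset_right)
  have hN : (⋃ v ∈ (S : Set V), H.neighborSet v) = neighborhood H S := by
    ext w
    simp only [Set.mem_iUnion, SimpleGraph.mem_neighborSet, mem_coe, mem_neighborhood, exists_prop]
  rw [hN, Set.ncard_coe_finset, Set.ncard_coe_finset]
  calc #S = #(S ∩ A ∪ S ∩ B) := congrArg _ hS
    _ ≤ #(S ∩ A) + #(S ∩ B) := card_union_le _ _
    _ ≤ #(neighborhood H (S ∩ A)) + #(neighborhood H (S ∩ B)) :=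
        add_le_add
          (card_le_card_neighborhood_of_forall_small hH hcard hA hB inter_subset_right)
          (card_le_card_neighborhood_of_forall_small hH.symm hcard.symm hB hA inter_subset_right)
    _ = #(neighborhood H (S ∩ A) ∪ neighborhood H (S ∩ B)) :=
        (card_union_of_disjoint hdisj).symm
    _ ≤ #(neighborhood H S) := card_le_card (union_subset
        (neighborhood_mono inter_subset_left) (neighborhood_mono inter_subset_left))

variable {G : SimpleGraph V} {K : ℕ} {f : V → Fin K → V}

lemma card_le_card_neighborhood_of_not_hasSmallTrap (hG : G.IsBipartiteWith (A : Set V) B)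
    (hf : f ∈ picks G K) (h : ¬ HasSmallTrap A B f) {S : Finset V} (hS : S ⊆ A)
    (hcard : 2 * #S ≤ #A + 1) : #S ≤ #(neighborhood (pickGraph f) S) := by
  by_contra! hlt
  refine h ⟨S, hS, _, ?_, hcard, hlt, fun v hv j => mem_neighborhood.2 ⟨v, hv, ?_⟩⟩
  · exact neighborhood_subset (isBipartiteWith_of_le hG (pickGraph_le hf)) hS
  · exact pickGraph_adj_of_mem_picks hf v j

theorem exists_isPerfectMatching_le_pickGraph {G' : SimpleGraph V} (hGG' : G ≤ G')
    (hG : G.IsBipartiteWith (A : Set V) B) (hAB : IsCompl A B) (hcard : #A = #B)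
    (hf : f ∈ picks G K) (hA : ¬ HasSmallTrap A B f) (hB : ¬ HasSmallTrap B A f) :
    ∃ M : G'.Subgraph, M.IsPerfectMatching ∧ M.spanningCoe ≤ pickGraph f := by
  have hle := pickGraph_le hf
  have hbip := isBipartiteWith_of_le hG hle
  obtain ⟨M, hM⟩ := exists_isPerfectMatching_of_forall_small hbip hAB hcard
    (fun _ => card_le_card_neighborhood_of_not_hasSmallTrap hG hf hA)
    (fun _ => card_le_card_neighborhood_of_not_hasSmallTrap hG.symm hf hB)
  exact ⟨G'.toSubgraph M.spanningCoe (M.spanningCoe_le.trans (hle.trans hGG')),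
    (SimpleGraph.Subgraph.IsPerfectMatching.toSubgraph_iff _).2 hM, M.spanningCoe_le⟩

end Hall

section Estimates

lemma choose_le_three_mul_div_pow (m s : ℕ) : (m.choose s : ℝ) ≤ (3 * m / s) ^ s := by
  rcases s.eq_zero_or_pos with rfl | hs
  · simp only [Nat.choose_zero_right, Nat.cast_one, pow_zero, le_refl]
  have hexp : (s : ℝ) ^ s / s.factorial ≤ 3 ^ s := by
    calc (s : ℝ) ^ s / s.factorial ≤ Real.exp s :=
          Real.pow_div_factorial_le_exp _ s.cast_nonneg s
      _ = Real.exp 1 ^ s := (Real.exp_one_pow s).symm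
      _ ≤ 3 ^ s := by
          gcongr
          exact Real.exp_one_lt_three.le
  calc (m.choose s : ℝ) ≤ (m : ℝ) ^ s / s.factorial := Nat.choose_le_pow_div s m
    _ = (s : ℝ) ^ s / s.factorial * (m / s) ^ s := by
        rw [div_pow]
        field_simp
    _ ≤ 3 ^ s * (m / s) ^ s := by gcongr
    _ = (3 * m / s) ^ s := by rw [← mul_pow, mul_div_assoc]

lemma choose_le_choose_succ {m r : ℕ} (hr : 2 * r + 1 ≤ m) : m.choose r ≤ m.choose (r + 1) := by
  refine le_of_mul_le_mul_right ?_ r.succ_pos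
  calc m.choose r * (r + 1) ≤ m.choose r * (m - r) := by gcongr; omega
    _ = m.choose (r + 1) * (r + 1) := (Nat.choose_succ_right_eq m r).symm

-- The left side is `9 x ^ (K - 2) / δ ^ 2 ≤ 36 / (2 ^ K δ ^ 2)`, which is where `576` comes from.
lemma three_div_sq_mul_pow_le {δ x : ℝ} (hδ : 0 < δ) (hδ1 : δ ≤ 1) (hx : 0 < x) (hx2 : x ≤ 1 / 2)
    {K : ℕ} (hK : 576 ≤ K * δ ^ 2) : (3 / (δ * x)) ^ 2 * x ^ K ≤ 1 / 16 := by
  have hK2 : 2 ≤ K := by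
    have : (2 : ℝ) ≤ K := by nlinarith [pow_le_one₀ hδ.le hδ1 (n := 2), K.cast_nonneg (α := ℝ)]
    exact_mod_cast this
  obtain ⟨n, rfl⟩ := Nat.exists_eq_add_of_le' hK2
  have hpow : 144 ≤ δ ^ 2 * 2 ^ n := by
    have : 576 ≤ δ ^ 2 * 2 ^ n * 4 := by
      calc 576 ≤ ((n + 2 : ℕ) : ℝ) * δ ^ 2 := hK
        _ ≤ 2 ^ (n + 2) * δ ^ 2 := by
            gcongr
            exact_mod_cast Nat.lt_two_pow_self.le
        _ = δ ^ 2 * 2 ^ n * 4 := by ring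
    linarith
  calc (3 / (δ * x)) ^ 2 * x ^ (n + 2) = 9 / δ ^ 2 * x ^ n := by
        field_simp
        ring
    _ ≤ 9 / δ ^ 2 * (1 / 2) ^ n := by gcongr
    _ = 9 / (δ ^ 2 * 2 ^ n) := by
        rw [one_div, inv_pow]
        field_simp
    _ ≤ 9 / 144 := by gcongr
    _ = 1 / 16 := by norm_num

lemma choose_mul_choose_mul_pow_le {δ : ℝ} (hδ : 0 < δ) (hδ1 : δ ≤ 1) {K m r : ℕ}
    (hK : 576 ≤ K * δ ^ 2) (hr : 2 * r + 1 ≤ m) (hsmall : ((r + 1 : ℕ) : ℝ) ≤ δ * m / 2) :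
    (m.choose (r + 1) : ℝ) * m.choose r * ((((r + 1 : ℕ) : ℝ) / (δ * m)) ^ K) ^ (r + 1) ≤
      (1 / 16) ^ (r + 1) := by
  have hm : (0 : ℝ) < m := by exact_mod_cast (by omega : 0 < m)
  set s := r + 1
  have hs : (0 : ℝ) < s := by positivity
  set x : ℝ := s / (δ * m) with hx
  have hx2 : x ≤ 1 / 2 := by
    rw [hx, div_le_iff₀ (by positivity)]
    linarith
  have hbase : (3 * m / s : ℝ) = 3 / (δ * x) := by
    rw [hx]
    field_simp
  have hchoose : (m.choose r : ℝ) ≤ m.choose s := by exact_mod_cast choose_le_choose_succ hr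
  calc (m.choose s : ℝ) * m.choose r * (x ^ K) ^ s
      ≤ (3 * m / s) ^ s * (3 * m / s) ^ s * (x ^ K) ^ s := by
        gcongr
        · exact choose_le_three_mul_div_pow m s
        · exact hchoose.trans (choose_le_three_mul_div_pow m s)
    _ = ((3 / (δ * x)) ^ 2 * x ^ K) ^ s := by rw [hbase, ← mul_pow, ← mul_pow, ← sq]
    _ ≤ (1 / 16) ^ s := by
        gcongr
        exact three_div_sq_mul_pow_le hδ hδ1 (by positivity) hx2 hK

lemma choose_mul_choose_mul_le {m r s t : ℕ} (ht : t ≤ m) :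
    (m.choose s : ℝ) * m.choose r * (1 / 64) ^ m ≤ (1 / 16) ^ t := by
  have htwo : ∀ k, (m.choose k : ℝ) ≤ 2 ^ m := fun k => by
    exact_mod_cast Nat.choose_le_two_pow m k
  calc (m.choose s : ℝ) * m.choose r * (1 / 64) ^ m ≤ 2 ^ m * 2 ^ m * (1 / 64) ^ m := by
        gcongr <;> exact htwo _
    _ = (1 / 16) ^ m := by
        rw [← mul_pow, ← mul_pow]
        norm_num
    _ ≤ (1 / 16) ^ t := pow_le_pow_of_le_one (by norm_num) (by norm_num) ht

lemma one_sub_half_pow_pow_le {δ : ℝ} (hδ : 0 < δ) (hδ1 : δ ≤ 1) {K m t : ℕ}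
    (hK : 576 ≤ K * δ ^ 2) (ht : δ / 4 * m ≤ t) :
    ((1 - δ / 2) ^ K) ^ t ≤ (1 / 64) ^ m := by
  have hexponent : 72 * (m : ℝ) ≤ δ / 2 * (K * t) := by
    calc 72 * (m : ℝ) = 576 * m / 8 := by ring
      _ ≤ K * δ ^ 2 * m / 8 := by gcongr
      _ = δ / 2 * K * (δ / 4 * m) := by ring
      _ ≤ δ / 2 * K * t := by gcongr
      _ = δ / 2 * (K * t) := by ring
  calc ((1 - δ / 2) ^ K) ^ t = (1 - δ / 2) ^ (K * t) := (pow_mul _ _ _).symm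
    _ ≤ Real.exp (-(δ / 2)) ^ (K * t) := by
        gcongr
        · linarith
        · exact Real.one_sub_le_exp_neg _
    _ = Real.exp (-(δ / 2 * (K * t))) := by
        rw [← Real.exp_nat_mul]
        push_cast
        ring_nf
    _ ≤ Real.exp (-(72 * m)) := by gcongr
    _ = (Real.exp 72)⁻¹ ^ m := by
        rw [← Real.exp_neg, ← Real.exp_nat_mul]
        ring_nf
    _ ≤ (1 / 64) ^ m := by
        rw [one_div]
        gcongr
        linarith [Real.add_one_le_exp (72 : ℝ)]

lemma sum_sixteenth_pow_succ_le (n : ℕ) : ∑ r ∈ range n, (1 / 16 : ℝ) ^ (r + 1) ≤ 1 / 4 := by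
  calc ∑ r ∈ range n, (1 / 16 : ℝ) ^ (r + 1) = ∑ r ∈ Ico 1 (n + 1), (1 / 16 : ℝ) ^ r := by
        rw [sum_Ico_eq_sum_range, Nat.add_sub_cancel]
        simp only [add_comm]
    _ ≤ (1 / 16) ^ 1 / (1 - 1 / 16) := geom_sum_Ico_le_of_lt_one (by norm_num) (by norm_num)
    _ ≤ 1 / 4 := by norm_num

end Estimates

section SuperRegular

variable {V : Type*} {G : SimpleGraph V} {A B : Finset V} {ε δ : ℝ}

/-- The one-sided form of super-regularity used in the blow-up lemma of Komlós, Sárközy and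
Szemerédi: `A` and `B` have the same size, sets `X ⊆ A` and `Y ⊆ B` of relative size at least `ε`
span a pair of density at least `δ`, and every vertex is adjacent to at least a proportion `δ` of
the other part. -/
structure IsLowerSuperRegular (G : SimpleGraph V) (A B : Finset V) (ε δ : ℝ) : Prop where
  card_eq : #A = #B
  le_card_left : ∀ v ∈ A, δ * #B ≤ #{w ∈ B | G.Adj v w}
  le_card_right : ∀ v ∈ B, δ * #A ≤ #{w ∈ A | G.Adj v w}
  le_edgeDensity : ∀ X ⊆ A, ∀ Y ⊆ B, ε * #A ≤ #X → ε * #B ≤ #Y → δ ≤ G.edgeDensity X Y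

lemma edgeDensity_eq_sum_div (G : SimpleGraph V) (X Y : Finset V) :
    (G.edgeDensity X Y : ℝ) = (∑ v ∈ X, (#{w ∈ Y | G.Adj v w} : ℝ)) / (#X * #Y) := by
  have hcard : #(G.interedges X Y) = ∑ v ∈ X, #{w ∈ Y | G.Adj v w} := by
    simp only [SimpleGraph.interedges, Rel.interedges, card_filter, sum_product]
  rw [SimpleGraph.edgeDensity_def, hcard]
  push_cast
  rfl

namespace IsLowerSuperRegular

lemma symm (h : IsLowerSuperRegular G A B ε δ) : IsLowerSuperRegular G B A ε δ where
  card_eq := h.card_eq.symm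
  le_card_left := h.le_card_right
  le_card_right := h.le_card_left
  le_edgeDensity X hX Y hY hXc hYc := by
    simpa only [G.edgeDensity_comm] using h.le_edgeDensity Y hY X hX hYc hXc

lemma mono {H : SimpleGraph V} (h : IsLowerSuperRegular G A B ε δ)
    (hle : ∀ v ∈ A, ∀ w ∈ B, G.Adj v w → H.Adj v w) : IsLowerSuperRegular H A B ε δ where
  card_eq := h.card_eq
  le_card_left v hv := (h.le_card_left v hv).trans <| by
    gcongr with w hw
    exact hle v hv w hw
  le_card_right v hv := (h.le_card_right v hv).trans <| by
    gcongr with w hw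
    exact fun hvw => (hle w hw v hv hvw.symm).symm
  le_edgeDensity X hX Y hY hXc hYc := (h.le_edgeDensity X hX Y hY hXc hYc).trans <| by
    simp only [edgeDensity_eq_sum_div]
    gcongr with v hv w hw
    exact hle v (hX hv) w (hY hw)

lemma card_pos (h : IsLowerSuperRegular G A B ε δ) (hδ : 0 < δ) : 0 < #A := by
  rw [Finset.card_pos, nonempty_iff_ne_empty]
  rintro rfl
  have := h.le_edgeDensity ∅ subset_rfl ∅ (empty_subset B) (by simp) (by simp [← h.card_eq])
  rw [SimpleGraph.edgeDensity_empty_left, Rat.cast_zero] at this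
  exact this.not_gt hδ

lemma le_one (h : IsLowerSuperRegular G A B ε δ) (hδ : 0 < δ) : δ ≤ 1 := by
  have hB : (0 : ℝ) < #B := by exact_mod_cast h.symm.card_pos hδ
  obtain ⟨v, hv⟩ := Finset.card_pos.1 (h.card_pos hδ)
  refine le_of_mul_le_mul_right ?_ hB
  rw [one_mul]
  exact (h.le_card_left v hv).trans (by exact_mod_cast card_filter_le _ _)

lemma card_lt_of_forall_card_filter_lt (h : IsLowerSuperRegular G A B ε δ) (hδ : 0 < δ)
    {X Y : Finset V} (hX : X ⊆ A) (hY : Y ⊆ B) (hYc : ε * #B ≤ #Y)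
    (hlow : ∀ v ∈ X, (#{w ∈ Y | G.Adj v w} : ℝ) < δ * #Y) : #X < ε * #A := by
  by_contra! hXc
  have hdens := h.le_edgeDensity X hX Y hY hXc hYc
  have hpos : (0 : ℝ) < #X * #Y := by
    refine lt_of_le_of_ne (by positivity) fun h0 => hdens.not_gt ?_
    rwa [edgeDensity_eq_sum_div, ← h0, div_zero]
  have hne : X.Nonempty := by
    rw [← Finset.card_pos]
    exact_mod_cast pos_of_mul_pos_left hpos (Nat.cast_nonneg _)
  rw [edgeDensity_eq_sum_div, le_div_iff₀ hpos] at hdens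
  refine hdens.not_gt ?_
  calc ∑ v ∈ X, (#{w ∈ Y | G.Adj v w} : ℝ) < ∑ _v ∈ X, δ * #Y := sum_lt_sum_of_nonempty hne hlow
    _ = δ * (#X * #Y) := by rw [sum_const, nsmul_eq_mul]; ring

lemma le_degree [Fintype V] (h : IsLowerSuperRegular G A B ε δ)
    (hG : G.IsBipartiteWith (A : Set V) B) {v : V} (hv : v ∈ A) : δ * #A ≤ G.degree v := by
  rw [← SimpleGraph.card_neighborFinset_eq_degree, SimpleGraph.isBipartiteWith_neighborFinset hG hv,
    h.card_eq]
  exact h.le_card_left v hv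

lemma le_degree_of_isCompl [Fintype V] (h : IsLowerSuperRegular G A B ε δ)
    (hG : G.IsBipartiteWith (A : Set V) B) (hAB : IsCompl A B) (v : V) :
    δ * #A ≤ G.degree v := by
  have hv : v ∈ A ∪ B := by
    rw [← sup_eq_union, hAB.sup_eq_top, top_eq_univ]
    exact mem_univ v
  rcases mem_union.1 hv with hv | hv
  · exact h.le_degree hG hv
  · rw [h.card_eq]
    exact h.symm.le_degree hG.symm hv

end IsLowerSuperRegular

end SuperRegular

section Traps

variable {V : Type*} [Fintype V] {G : SimpleGraph V} {A B S W : Finset V} {δ : ℝ} {K : ℕ}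

lemma uniformProb_confined_le_of_subset (h : IsLowerSuperRegular G A B (δ / 4) δ) (hδ : 0 < δ)
    (hG : G.IsBipartiteWith (A : Set V) B) (hS : S ⊆ A) :
    uniformProb (picks G K) (fun f => ∀ v ∈ S, ∀ j, f v j ∈ W) ≤ ((#W / (δ * #A)) ^ K) ^ #S := by
  have hA : (0 : ℝ) < #A := by exact_mod_cast h.card_pos hδ
  refine uniformProb_picks_confined_le fun v hv =>
    (uniformProb_le_card_div_card fun _ _ hw => hw).trans ?_
  rw [SimpleGraph.card_neighborFinset_eq_degree]
  gcongr
  exact h.le_degree hG (hS hv)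

lemma uniformProb_neighborFinset_mem_le (hG : G.IsBipartiteWith (A : Set V) B) {v : V} (hv : v ∈ A)
    (hδ : 0 < δ) (hdeg : 0 < G.degree v) (hW : W ⊆ B) (hWB : 2 * #W ≤ #B)
    (hlow : δ * #(B \ W) ≤ #{w ∈ B \ W | G.Adj v w}) :
    uniformProb (G.neighborFinset v) (· ∈ W) ≤ 1 - δ / 2 := by
  have hne : (G.neighborFinset v).Nonempty := by
    rwa [← card_pos, SimpleGraph.card_neighborFinset_eq_degree]
  have hsub : {w ∈ B \ W | G.Adj v w} ⊆ G.neighborFinset v := fun w hw =>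
    (SimpleGraph.mem_neighborFinset _ _ _).2 (mem_filter.1 hw).2
  have hhalf : (#B : ℝ) / 2 ≤ #(B \ W) := by
    rw [cast_card_sdiff hW]
    have : (2 * #W : ℝ) ≤ #B := by exact_mod_cast hWB
    linarith
  have hdegB : (G.degree v : ℝ) ≤ #B := by
    exact_mod_cast SimpleGraph.isBipartiteWith_degree_le hG hv
  have hout : δ / 2 ≤ uniformProb (G.neighborFinset v) (· ∉ W) := by
    refine le_trans ?_ <| card_div_card_le_uniformProb hsub fun w hw =>
      (mem_sdiff.1 (mem_filter.1 hw).1).2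
    rw [SimpleGraph.card_neighborFinset_eq_degree, le_div_iff₀ (by exact_mod_cast hdeg)]
    calc δ / 2 * G.degree v ≤ δ / 2 * #B := by gcongr
      _ = δ * (#B / 2) := by ring
      _ ≤ δ * #(B \ W) := by gcongr
      _ ≤ #{w ∈ B \ W | G.Adj v w} := hlow
  rw [uniformProb_not hne] at hout
  linarith

-- Regularity leaves at least `δ / 4 * #A` vertices of `S` with many neighbours outside `W`.
lemma uniformProb_confined_le_of_large (h : IsLowerSuperRegular G A B (δ / 4) δ) (hδ : 0 < δ)
    (hG : G.IsBipartiteWith (A : Set V) B) (hK : 576 ≤ K * δ ^ 2) (hS : S ⊆ A) (hW : W ⊆ B)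
    (hlarge : δ * #A / 2 ≤ #S) (hWB : 2 * #W ≤ #B) :
    uniformProb (picks G K) (fun f => ∀ v ∈ S, ∀ j, f v j ∈ W) ≤ (1 / 64) ^ #A := by
  have hA : (0 : ℝ) < #A := by exact_mod_cast h.card_pos hδ
  have hδ1 := h.le_one hδ
  set X := {v ∈ S | (#{w ∈ B \ W | G.Adj v w} : ℝ) < δ * #(B \ W)}
  have hY : δ / 4 * #B ≤ #(B \ W) := by
    rw [cast_card_sdiff hW]
    have : (2 * #W : ℝ) ≤ #B := by exact_mod_cast hWB
    nlinarith
  have hX : (#X : ℝ) < δ / 4 * #A :=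
    h.card_lt_of_forall_card_filter_lt hδ ((filter_subset _ S).trans hS) sdiff_subset hY
      fun v hv => (mem_filter.1 hv).2
  have hT : δ / 4 * #A ≤ #(S \ X) := by
    rw [cast_card_sdiff (filter_subset _ S)]
    linarith
  calc uniformProb (picks G K) (fun f => ∀ v ∈ S, ∀ j, f v j ∈ W)
      ≤ uniformProb (picks G K) (fun f => ∀ v ∈ S \ X, ∀ j, f v j ∈ W) :=
        uniformProb_mono fun f _ hf v hv => hf v (mem_sdiff.1 hv).1
    _ ≤ ((1 - δ / 2) ^ K) ^ #(S \ X) := by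
        refine uniformProb_picks_confined_le fun v hv => ?_
        obtain ⟨hvS, hvX⟩ := mem_sdiff.1 hv
        have hdeg : (0 : ℝ) < G.degree v := (mul_pos hδ hA).trans_le (h.le_degree hG (hS hvS))
        refine uniformProb_neighborFinset_mem_le hG (hS hvS) hδ (by exact_mod_cast hdeg) hW hWB ?_
        exact not_lt.1 fun hlt => hvX (mem_filter.2 ⟨hvS, hlt⟩)
    _ ≤ (1 / 64) ^ #A := one_sub_half_pow_pow_le hδ hδ1 hK hT

lemma uniformProb_exists_confined_le (h : IsLowerSuperRegular G A B (δ / 4) δ) (hδ : 0 < δ)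
    (hG : G.IsBipartiteWith (A : Set V) B) (hK : 576 ≤ K * δ ^ 2) {r : ℕ} (hr : 2 * r + 1 ≤ #A) :
    uniformProb (picks G K) (fun f => ∃ p ∈ A.powersetCard (r + 1) ×ˢ B.powersetCard r,
      ∀ v ∈ p.1, ∀ j, f v j ∈ p.2) ≤ (1 / 16) ^ (r + 1) := by
  have hpairs : (#(A.powersetCard (r + 1) ×ˢ B.powersetCard r) : ℝ) =
      (#A).choose (r + 1) * (#A).choose r := by
    rw [card_product, card_powersetCard, card_powersetCard, ← h.card_eq, Nat.cast_mul]
  rcases le_total ((r + 1 : ℕ) : ℝ) (δ * #A / 2) with hsmall | hlarge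
  · refine (uniformProb_exists_mem_le _ _ fun p hp => ?_).trans
      (hpairs ▸ choose_mul_choose_mul_pow_le hδ (h.le_one hδ) hK hr hsmall)
    simp only [mem_product, mem_powersetCard] at hp
    obtain ⟨⟨hS, hSr⟩, -, hWr⟩ := hp
    refine (uniformProb_confined_le_of_subset h hδ hG hS).trans ?_
    rw [hSr, hWr]
    gcongr
    exact r.le_succ
  · refine (uniformProb_exists_mem_le _ _ fun p hp => ?_).trans
      (hpairs ▸ choose_mul_choose_mul_le (by omega))
    simp only [mem_product, mem_powersetCard] at hp
    obtain ⟨⟨hS, hSr⟩, hW, hWr⟩ := hp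
    exact uniformProb_confined_le_of_large h hδ hG hK hS hW (hSr ▸ hlarge)
      (by rw [hWr, ← h.card_eq]; omega)

theorem uniformProb_hasSmallTrap_le (h : IsLowerSuperRegular G A B (δ / 4) δ) (hδ : 0 < δ)
    (hG : G.IsBipartiteWith (A : Set V) B) (hK : 576 ≤ K * δ ^ 2) :
    uniformProb (picks G K) (HasSmallTrap A B) ≤ 1 / 4 := by
  calc uniformProb (picks G K) (HasSmallTrap A B)
      ≤ uniformProb (picks G K) (fun f => ∃ r ∈ range ((#A + 1) / 2),
          ∃ p ∈ A.powersetCard (r + 1) ×ˢ B.powersetCard r, ∀ v ∈ p.1, ∀ j, f v j ∈ p.2) :=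
        uniformProb_mono fun f _ hf => hf.exists_confined h.card_eq
    _ ≤ ∑ r ∈ range ((#A + 1) / 2), (1 / 16 : ℝ) ^ (r + 1) := by
        refine (uniformProb_exists_mem_le_sum _ _).trans (sum_le_sum fun r hr => ?_)
        have := mem_range.1 hr
        exact uniformProb_exists_confined_le h hδ hG hK (by omega)
    _ ≤ 1 / 4 := sum_sixteenth_pow_succ_le _

theorem half_le_uniformProb_exists_isPerfectMatching {G' : SimpleGraph V} (hGG' : G ≤ G')
    (h : IsLowerSuperRegular G A B (δ / 4) δ) (hδ : 0 < δ)
    (hG : G.IsBipartiteWith (A : Set V) B) (hAB : IsCompl A B) (hK : 576 ≤ K * δ ^ 2) :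
    1 / 2 ≤ uniformProb (picks G K)
      (fun f => ∃ M : G'.Subgraph, M.IsPerfectMatching ∧ M.spanningCoe ≤ pickGraph f) := by
  have hA : (0 : ℝ) < #A := by exact_mod_cast h.card_pos hδ
  have hne : (picks G K).Nonempty := picks_nonempty fun v => by
    exact_mod_cast (mul_pos hδ hA).trans_le (h.le_degree_of_isCompl hG hAB v)
  have htrap : uniformProb (picks G K) (fun f => HasSmallTrap A B f ∨ HasSmallTrap B A f) ≤ 1 / 2 :=
    (uniformProb_or_le _ _).trans <| by
      linarith [uniformProb_hasSmallTrap_le h hδ hG hK,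
        uniformProb_hasSmallTrap_le h.symm hδ hG.symm hK]
  calc (1 / 2 : ℝ)
      ≤ 1 - uniformProb (picks G K) (fun f => HasSmallTrap A B f ∨ HasSmallTrap B A f) := by
        linarith
    _ = uniformProb (picks G K) (fun f => ¬ (HasSmallTrap A B f ∨ HasSmallTrap B A f)) :=
        (uniformProb_not hne).symm
    _ ≤ uniformProb (picks G K)
          (fun f => ∃ M : G'.Subgraph, M.IsPerfectMatching ∧ M.spanningCoe ≤ pickGraph f) := by
        refine uniformProb_mono fun f hf hno => ?_
        obtain ⟨hnoA, hnoB⟩ := not_or.1 hno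
        exact exists_isPerfectMatching_le_pickGraph hGG' hG hAB h.card_eq hf hnoA hnoB

end Traps

theorem exists_isSpread_of_isLowerSuperRegular {V : Type*} [Fintype V] {G : SimpleGraph V}
    {A B : Finset V} {δ : ℝ} {K : ℕ} (hAB : IsCompl A B)
    (h : IsLowerSuperRegular G A B (δ / 4) δ) (hδ : 0 < δ) (hK : 576 ≤ K * δ ^ 2) :
    ∃ μ : PMF {M : G.Subgraph // M.IsPerfectMatching}, IsSpread μ (4 * K / (δ * #A)) := by
  have hA : (0 : ℝ) < #A := by exact_mod_cast h.card_pos hδ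
  set H := G.between (A : Set V) B
  have hH : H.IsBipartiteWith (A : Set V) B :=
    SimpleGraph.between_isBipartiteWith (disjoint_coe.2 hAB.disjoint)
  have hHreg : IsLowerSuperRegular H A B (δ / 4) δ :=
    h.mono fun v hv w hw hvw => SimpleGraph.between_adj.2 ⟨hvw, Or.inl ⟨hv, hw⟩⟩
  exact exists_isSpread (mul_pos hδ hA) (hHreg.le_degree_of_isCompl hH hAB)
    (half_le_uniformProb_exists_isPerfectMatching SimpleGraph.between_le hHreg hδ hH hAB hK)

lemma edgeDensityR_eq_edgeDensity {V : Type} (G : SimpleGraph V) (X Y : Finset V) :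
    edgeDensityR G X Y = G.edgeDensity X Y := by
  rw [edgeDensity_eq_sum_div, edgeDensityR]

lemma isLowerSuperRegular_of_isEpsSuperRegularPair {V : Type} {G : SimpleGraph V} {A B : Finset V}
    {ε δ : ℝ} {N : ℕ} (hdens : δ + ε ≤ edgeDensityR G A B)
    (h : IsEpsSuperRegularPair G A B ε N) : IsLowerSuperRegular G A B ε δ := by
  obtain ⟨hreg, rfl, hB, hdegA, hdegB⟩ := h
  have hδ : δ ≤ edgeDensityR G A B - ε := by linarith
  refine ⟨hB.symm, fun v hv => ?_, fun v hv => ?_, fun X hX Y hY hXc hYc => ?_⟩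
  · rw [hB]
    exact (by gcongr : δ * #A ≤ _).trans (hdegA v hv).1
  · exact (by gcongr : δ * #A ≤ _).trans (hdegB v hv).1
  · rw [← edgeDensityR_eq_edgeDensity]
    linarith [(abs_le.1 (hreg X hX Y hY hXc hYc)).1]

end SpreadMatching

theorem spread_perfect_matchings_eps_super_regular_general (δ : ℝ) (hδ : 0 < δ) :
    ∃ C : ℝ, 0 < C ∧ ∀ (V : Type*) [Fintype V] (G : SimpleGraph V) (A B : Finset V),
      IsCompl A B → SpreadMatching.IsLowerSuperRegular G A B (δ / 4) δ →
        ∃ μ : PMF {M : G.Subgraph // M.IsPerfectMatching}, SpreadMatching.IsSpread μ (C / #A) := by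
  obtain ⟨K, hK⟩ := exists_nat_ge (576 / δ ^ 2)
  have hK' : 576 ≤ K * δ ^ 2 := (div_le_iff₀ (by positivity)).1 hK
  have hKpos : (0 : ℝ) < K := (by positivity : (0 : ℝ) < 576 / δ ^ 2).trans_le hK
  refine ⟨4 * K / δ, by positivity, fun V _ G A B hAB h => ?_⟩
  rw [div_div]
  exact SpreadMatching.exists_isSpread_of_isLowerSuperRegular hAB h hδ hK'

theorem spread_perfect_matchings_eps_super_regular (d₀ : ℝ) (hd₀ : 0 < d₀) :
    ∃ ε C : ℝ, 0 < ε ∧ 0 < C ∧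
      ∀ (V : Type) [Fintype V] [DecidableEq V] (G : SimpleGraph V) (A : Finset V) (m : ℕ),
        A.card = m → Aᶜ.card = m →
        (∀ u v : V, G.Adj u v → (u ∈ A ↔ v ∉ A)) →
        d₀ ≤ edgeDensityR G A Aᶜ →
        IsEpsSuperRegularPair G A Aᶜ ε m →
        ∃ μ : PMF {M : G.Subgraph // M.IsPerfectMatching},
          ∀ (k : ℕ) (e : Fin k → Sym2 V), Function.Injective e →
            (∀ i, e i ∈ G.edgeSet) →
            μ.toOuterMeasure {M | ∀ i, e i ∈ (M : G.Subgraph).edgeSet} ≤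
              ENNReal.ofReal ((C / m) ^ k) := by
  obtain ⟨C, hC, hspread⟩ :=
    spread_perfect_matchings_eps_super_regular_general (d₀ / 2) (by positivity)
  refine ⟨d₀ / 2 / 4, C, by positivity, hC, fun V _ _ G A m hA _ _ hd hreg => ?_⟩
  subst hA
  exact hspread V G A Aᶜ isCompl_compl
    (SpreadMatching.isLowerSuperRegular_of_isEpsSuperRegularPair (by linarith) hreg)
end
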